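/- Define coefficients δ(n) by the power series expansion R(q^2)/R(q)^2 = ∑_{n≥0} δ(n)·q^n, where R(q) = (q, q^4; q^5)_∞/(q^2, q^3; q^5)_∞. Then for all n ≥ 0: δ(n) > 0 if n ≡ 0 or 1 (mod 5), and δ(n) < 0 if n ≡ 2, 3, or 4 (mod 5), with the single exception δ(2) = 0. -/

import Mathlib

/-! The signs come from an explicit five-dissection of `F(q) = R(q ^ 2) / R(q) ^ 2` in which every
component is an infinite product with visibly positive coefficients. It is proved for real
`0 < q < 1`, which suffices because a power series vanishing on `(0, 1)` is zero
(`Dissect.coeff_eq_zero`). The series of the hypothesis converges there: a divergent series would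
have the value `0`, while `F(q) ≠ 0`.

Let `θ(z) = ∑ (-1) ^ n p ^ (n (n - 1) / 2) z ^ n`, a product of `(p; p)`, `(z; p)` and `(p / z; p)`
by Jacobi's triple product (`Dissect.jtp`). Put `w = q ^ 5`, and let `J j = θ(q ^ j)` to the base
`q ^ 10` and `b j = θ(w ^ j)` to the base `w ^ 10`. Then `F = J 2 ^ 3 J 3 ^ 2 / (J 4 ^ 3 J 1 ^ 2)`,
and Weierstrass' three-term relations (`Dissect.three_term`) give

  `F = (J 3 J 4 + q J 1 J 2) / (J 3 J 4 - q J 1 J 2)`.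

The quotients `J 3 / J 2` and `J 1 / J 4` are dissected by means of the Lambert series
`L(z, a) = ∑ z ^ n / (1 - a p ^ n)`. It satisfies `θ(z) L(z, a) = Ph(a) θ(z a)`
(`Dissect.th_mul_L`), and `L(z, a) = L(a, z)`, so that `Ph(a) θ(a)` is independent of `a`. Taking
`a = w` and sorting the summation index modulo `5` expresses both quotients, up to the same factor
`Ph(w)`, through the `b j` (`Dissect.dissect_A`, `Dissect.dissect_B`). The three-term relations
among the `b j` then give `F = N / D` (`Dissect.dissection`), where `N` has five terms, each a power
of `q` times a monomial in `w` and the `b j`, and `D = b 1 ^ 2 b 4 ^ 3 (b 5 ^ 2 - 4 w b 1 b 3)`.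

The bracket is a square, `(∑ (-1) ^ n w ^ n ^ 2) ^ 2` (`Dissect.phi_sq`): this is the sum of
`(-1) ^ (x + y) w ^ (x ^ 2 + y ^ 2)` over the Gaussian integers `x + y i`, split into the multiples
of `2 + i` and the four unit multiples of the class of `1`. Hence `D` is an infinite product, and

  `F(q) = A₀ + 2 q A₁ - 4 q ^ 2 w A₂ - 4 q ^ 3 A₃ - 2 q ^ 4 A₄`

with products `Aᵢ` in `w` (`Dissect.rr_dissection`). Each `Aᵢ` is `1 / (1 - w)` times a power series
with nonnegative coefficients and positive constant term, so all its coefficients are positive. This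
gives the signs; the residue class `2` begins with `q ^ 2 w = q ^ 7`, whence `δ 2 = 0`. -/

noncomputable def qp (a q : ℂ) : ℂ := ∏' k : ℕ, (1 - a * q ^ k)

noncomputable def GG (q : ℂ) : ℂ := 1 / (qp q (q ^ 5) * qp (q ^ 4) (q ^ 5))

noncomputable def HH (q : ℂ) : ℂ := 1 / (qp (q ^ 2) (q ^ 5) * qp (q ^ 3) (q ^ 5))

noncomputable def RR (q : ℂ) : ℂ :=
  (qp q (q ^ 5) * qp (q ^ 4) (q ^ 5)) / (qp (q ^ 2) (q ^ 5) * qp (q ^ 3) (q ^ 5))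

noncomputable def phi (q : ℂ) : ℂ := ∑' n : ℤ, q ^ (n.natAbs ^ 2)

noncomputable def psi (q : ℂ) : ℂ := ∑' n : ℕ, q ^ (n * (n + 1) / 2)

namespace Dissect

/-! ### Theta functions -/

/-- The triangular exponent `n (n - 1) / 2`, for `n : ℤ`. -/
def tri (n : ℤ) : ℤ := n * (n - 1) / 2

lemma two_mul_tri (n : ℤ) : 2 * tri n = n * (n - 1) := by
  have h : (2 : ℤ) ∣ n * (n - 1) := by
    have := Int.even_mul_pred_self n
    exact this.two_dvd
  unfold tri
  omega

lemma tri_eq {n k : ℤ} (h : 2 * k = n * (n - 1)) : tri n = k := by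
  have := two_mul_tri n
  omega

lemma tri_add (m n : ℤ) : tri (m + n) = tri m + tri n + m * n := by
  apply tri_eq
  have h1 := two_mul_tri m
  have h2 := two_mul_tri n
  linear_combination h1 + h2

lemma tri_succ (n : ℤ) : tri (n + 1) = tri n + n := by
  apply tri_eq
  have h1 := two_mul_tri n
  linear_combination h1

lemma tri_one_sub (n : ℤ) : tri (1 - n) = tri n := by
  apply tri_eq
  have h1 := two_mul_tri n
  linear_combination h1

@[simp] lemma tri_zero : tri 0 = 0 := by simp [tri]
@[simp] lemma tri_one : tri 1 = 0 := by simp [tri]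

/-- The unsigned bilateral theta series `∑ p ^ (n (n - 1) / 2) z ^ n`. -/
noncomputable def S (p z : ℝ) : ℝ := ∑' n : ℤ, p ^ tri n * z ^ n

/-- The theta function `∑ (-1) ^ n p ^ (n (n - 1) / 2) z ^ n`. -/
noncomputable def th (p z : ℝ) : ℝ := S p (-z)

lemma summable_S_nat {p : ℝ} (hp : 0 < p) (hp1 : p < 1) {z : ℝ} (hz : z ≠ 0) :
    Summable fun n : ℕ => p ^ tri n * z ^ (n : ℤ) := by
  refine summable_of_ratio_test_tendsto_lt_one (l := 0) zero_lt_one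
    (Filter.Eventually.of_forall fun n => by positivity) ?_
  have h : (fun n : ℕ => ‖p ^ tri ((n + 1 : ℕ) : ℤ) * z ^ ((n + 1 : ℕ) : ℤ)‖ /
      ‖p ^ tri n * z ^ (n : ℤ)‖) = fun n : ℕ => p ^ n * |z| := by
    funext n
    have : p ^ tri ((n + 1 : ℕ) : ℤ) * z ^ ((n + 1 : ℕ) : ℤ) =
        (p ^ n * z) * (p ^ tri n * z ^ (n : ℤ)) := by
      push_cast
      rw [tri_succ, zpow_add₀ hp.ne', zpow_add_one₀ hz, zpow_natCast]
      ring
    rw [this, norm_mul, mul_div_assoc, div_self (norm_ne_zero_iff.2 (by positivity)), mul_one, norm_mul,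
      Real.norm_of_nonneg (by positivity), Real.norm_eq_abs]
  rw [h]
  simpa using (tendsto_pow_atTop_nhds_zero_of_lt_one hp.le hp1).mul_const |z|

lemma summable_S {p : ℝ} (hp : 0 < p) (hp1 : p < 1) {z : ℝ} (hz : z ≠ 0) :
    Summable fun n : ℤ => p ^ tri n * z ^ n := by
  refine Summable.of_nat_of_neg (summable_S_nat hp hp1 hz) ?_
  have h := (summable_S_nat hp hp1 (z := p / z) (div_ne_zero hp.ne' hz))
  refine h.congr fun n => ?_
  have : tri (-(n : ℤ)) = tri n + n := by
    apply tri_eq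
    have h1 := two_mul_tri (n : ℤ)
    linear_combination h1
  rw [this, zpow_add₀ hp.ne', div_zpow, zpow_neg]
  field_simp

lemma S_mul {p : ℝ} (hp : 0 < p) {z : ℝ} (hz : z ≠ 0) : z * S p (p * z) = S p z := by
  unfold S
  rw [← tsum_mul_left, ← (Equiv.addRight (1 : ℤ)).tsum_eq (fun n : ℤ => p ^ tri n * z ^ n)]
  refine tsum_congr fun n => ?_
  simp only [Equiv.coe_addRight]
  rw [tri_succ, zpow_add₀ hp.ne', zpow_add_one₀ hz, mul_zpow]
  ring

lemma S_inv {p z : ℝ} (hz : z ≠ 0) : z * S p z⁻¹ = S p z := by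
  unfold S
  rw [← tsum_mul_left, ← (Equiv.subLeft (1 : ℤ)).tsum_eq (fun n : ℤ => p ^ tri n * z ^ n)]
  refine tsum_congr fun n => ?_
  simp only [Equiv.subLeft_apply]
  rw [tri_one_sub, zpow_sub₀ hz, inv_zpow, zpow_one]
  field_simp

lemma th_mul {p : ℝ} (hp : 0 < p) {z : ℝ} (hz : z ≠ 0) : th p (p * z) = -th p z / z := by
  have := S_mul hp (neg_ne_zero.2 hz)
  unfold th
  rw [← this, mul_neg]
  field_simp

lemma th_one (p : ℝ) : th p 1 = 0 := by
  have := S_inv (p := p) (z := -1) (by norm_num)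
  unfold th
  have h : ((-1 : ℝ))⁻¹ = -1 := by norm_num
  rw [h] at this
  linarith

lemma th_refl {p : ℝ} (hp : 0 < p) {z : ℝ} (hz : z ≠ 0) : th p (p / z) = th p z := by
  have h1 := S_mul hp (z := (-z)⁻¹) (inv_ne_zero (neg_ne_zero.2 hz))
  have h2 := S_inv (p := p) (neg_ne_zero.2 hz)
  unfold th
  rw [← h2, ← h1]
  have : p * (-z)⁻¹ = -(p / z) := by field_simp
  rw [this]
  field_simp

lemma th_zpow {p : ℝ} (hp : 0 < p) (N : ℤ) : th p (p ^ N) = 0 := by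
  induction N using Int.induction_on with
  | zero => simpa using th_one p
  | succ n ih =>
    rw [zpow_add_one₀ hp.ne', mul_comm, th_mul hp (by positivity), ih]
    simp
  | pred n ih =>
    have h := th_mul hp (z := p ^ (-(n : ℤ) - 1)) (by positivity)
    rw [← zpow_one_add₀ hp.ne', show 1 + (-(n : ℤ) - 1) = -n by ring, ih] at h
    have h2 : p ^ (-(n : ℤ) - 1) ≠ 0 := by positivity
    field_simp at h
    linarith

lemma hasSum_th {p : ℝ} (hp : 0 < p) (hp1 : p < 1) {z : ℝ} (hz : z ≠ 0) :
    HasSum (fun n : ℤ => p ^ tri n * (-z) ^ n) (th p z) :=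
  (summable_S hp hp1 (neg_ne_zero.2 hz)).hasSum

/-- A sum over `γ` computed along a bijection `ι × β → γ` with `ι` finite. -/
lemma tsum_split {ι β γ : Type*} [Fintype ι] (e : ι × β → γ) (he : Function.Bijective e)
    {f : γ → ℝ} (hf : Summable f) : ∑' c, f c = ∑ i, ∑' b, f (e (i, b)) := by
  have h1 : Summable fun x : ι × β => f (e x) := hf.comp_injective he.1
  rw [← (Equiv.ofBijective e he).tsum_eq f, ← tsum_fintype (L := .unconditional ι)]
  exact h1.tsum_prod

/-- The product `θ(xy) θ(x/y)` separates the variables; all three-term relations follow. -/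
lemma th_mul_th {p : ℝ} (hp : 0 < p) (hp1 : p < 1) {x y : ℝ} (hx : 0 < x) (hy : 0 < y) :
    th p (x * y) * th p (x / y) =
      x * (x * S (p ^ 2) (p ^ 2 * x ^ 2) * S (p ^ 2) (p * y ^ 2)
        - S (p ^ 2) (p * x ^ 2) * (y * S (p ^ 2) (p ^ 2 * y ^ 2))) := by
  have hp2 : 0 < p ^ 2 := by positivity
  have hp21 : p ^ 2 < 1 := by nlinarith
  have s1 := summable_S hp hp1 (z := -(x * y)) (by simp [hx.ne', hy.ne'])
  have s2 := summable_S hp hp1 (z := -(x / y)) (by simp [hx.ne', hy.ne'])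
  have hs := summable_mul_of_summable_norm s1.norm s2.norm
  unfold th
  rw [S, S, tsum_mul_tsum_of_summable_norm s1.norm s2.norm]
  let e : Bool × (ℤ × ℤ) → ℤ × ℤ := fun u =>
    bif u.1 then (u.2.1 + u.2.2 + 1, u.2.1 - u.2.2) else (u.2.1 + u.2.2, u.2.1 - u.2.2)
  have he : Function.Bijective e := by
    constructor
    · rintro ⟨i, a, b⟩ ⟨j, c, d⟩ h
      cases i <;> cases j <;> simp only [e, cond_true, cond_false, Prod.mk.injEq] at h <;>
        obtain ⟨h1, h2⟩ := h
      · rw [show a = c by omega, show b = d by omega]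
      · omega
      · omega
      · rw [show a = c by omega, show b = d by omega]
    · rintro ⟨m, n⟩
      rcases Int.even_or_odd' (m + n) with ⟨k, hk | hk⟩
      · exact ⟨(false, k, m - k), by simp [e]; omega⟩
      · exact ⟨(true, k, k - n), by simp [e]; omega⟩
  rw [tsum_split e he hs, Fintype.sum_bool]
  have hpx : (x : ℝ) ≠ 0 := hx.ne'
  have hpy : (y : ℝ) ≠ 0 := hy.ne'
  have hpp : (p : ℝ) ≠ 0 := hp.ne'
  have E : x * S (p ^ 2) (p ^ 2 * x ^ 2) = x⁻¹ * S (p ^ 2) (x ^ 2) := by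
    rw [← S_mul hp2 (z := x ^ 2) (by positivity)]
    field_simp
  rw [E]
  have c1 := summable_S hp2 hp21 (z := x ^ 2) (by positivity)
  have c2 := summable_S hp2 hp21 (z := p * y ^ 2) (by positivity)
  have c3 := summable_S hp2 hp21 (z := p * x ^ 2) (by positivity)
  have c4 := summable_S hp2 hp21 (z := p ^ 2 * y ^ 2) (by positivity)
  have t1 : ∑' b : ℤ × ℤ, p ^ tri (e (false, b)).1 * (-(x * y)) ^ (e (false, b)).1 *
      (p ^ tri (e (false, b)).2 * (-(x / y)) ^ (e (false, b)).2) =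
      S (p ^ 2) (x ^ 2) * S (p ^ 2) (p * y ^ 2) := by
    rw [S, S, tsum_mul_tsum_of_summable_norm c1.norm c2.norm]
    refine tsum_congr fun ⟨a, b⟩ => ?_
    simp only [e, cond_false]
    have h1 : tri (a + b) + tri (a - b) = 2 * tri a + 2 * tri b + b := by
      have h1 := two_mul_tri (a + b); have h2 := two_mul_tri (a - b)
      have h3 := two_mul_tri a; have h4 := two_mul_tri b
      have : 2 * (tri (a + b) + tri (a - b)) = 2 * (2 * tri a + 2 * tri b + b) := by
        linear_combination h1 + h2 - 2 * h3 - 2 * h4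
      omega
    have h2 : p ^ tri (a + b) * p ^ tri (a - b) = (p ^ 2) ^ tri a * (p ^ 2) ^ tri b * p ^ b := by
      rw [← zpow_add₀ hpp, h1, zpow_add₀ hpp, zpow_add₀ hpp, zpow_mul, zpow_mul]
      norm_cast
    have h3 : (-(x * y)) ^ (a + b) * (-(x / y)) ^ (a - b) = (x ^ 2) ^ a * (y ^ 2) ^ b := by
      have s : (-(x * y)) ^ (a + b) * (-(x / y)) ^ (a - b) =
          ((-(x * y)) * (-(x / y))) ^ a * ((-(x * y)) * (-(x / y))⁻¹) ^ b := by
        rw [zpow_add₀ (by simp [hpx, hpy]), zpow_sub₀ (by simp [hpx, hpy]), mul_zpow, mul_zpow,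
          inv_zpow]
        ring
      rw [s]
      congr 2 <;> field_simp
    rw [mul_zpow p]
    linear_combination (-(x * y)) ^ (a + b) * (-(x / y)) ^ (a - b) * h2 +
      (p ^ 2) ^ tri a * (p ^ 2) ^ tri b * p ^ b * h3
  have t2 : ∑' b : ℤ × ℤ, p ^ tri (e (true, b)).1 * (-(x * y)) ^ (e (true, b)).1 *
      (p ^ tri (e (true, b)).2 * (-(x / y)) ^ (e (true, b)).2) =
      -(x * y) * (S (p ^ 2) (p * x ^ 2) * S (p ^ 2) (p ^ 2 * y ^ 2)) := by
    rw [S, S, tsum_mul_tsum_of_summable_norm c3.norm c4.norm, ← tsum_mul_left]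
    refine tsum_congr fun ⟨a, b⟩ => ?_
    simp only [e, cond_true]
    have h1 : tri (a + b + 1) + tri (a - b) = 2 * tri a + 2 * tri b + a + 2 * b := by
      have h1 := two_mul_tri (a + b + 1); have h2 := two_mul_tri (a - b)
      have h3 := two_mul_tri a; have h4 := two_mul_tri b
      have : 2 * (tri (a + b + 1) + tri (a - b)) = 2 * (2 * tri a + 2 * tri b + a + 2 * b) := by
        linear_combination h1 + h2 - 2 * h3 - 2 * h4
      omega
    have h2 : p ^ tri (a + b + 1) * p ^ tri (a - b) =
        (p ^ 2) ^ tri a * (p ^ 2) ^ tri b * p ^ a * (p ^ 2) ^ b := by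
      rw [← zpow_add₀ hpp, h1, zpow_add₀ hpp, zpow_add₀ hpp, zpow_add₀ hpp, zpow_mul, zpow_mul,
        zpow_mul p 2 b]
      norm_cast
    have h3 : (-(x * y)) ^ (a + b + 1) * (-(x / y)) ^ (a - b) =
        -(x * y) * ((x ^ 2) ^ a * (y ^ 2) ^ b) := by
      have s : (-(x * y)) ^ (a + b + 1) * (-(x / y)) ^ (a - b) =
          -(x * y) * (((-(x * y)) * (-(x / y))) ^ a * ((-(x * y)) * (-(x / y))⁻¹) ^ b) := by
        rw [zpow_add_one₀ (by simp [hpx, hpy]), zpow_add₀ (by simp [hpx, hpy]),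
          zpow_sub₀ (by simp [hpx, hpy]), mul_zpow, mul_zpow, inv_zpow]
        ring
      rw [s]
      congr 3 <;> field_simp
    rw [mul_zpow p, mul_zpow (p ^ 2)]
    linear_combination (-(x * y)) ^ (a + b + 1) * (-(x / y)) ^ (a - b) * h2 +
      (p ^ 2) ^ tri a * (p ^ 2) ^ tri b * p ^ a * (p ^ 2) ^ b * h3
  rw [t1, t2]
  field_simp
  ring

/-! ### The Kronecker–Lambert series -/

/-- The Kronecker (Lambert) series `∑ z ^ n / (1 - a p ^ n)` over all integers `n`. -/
noncomputable def L (p z a : ℝ) : ℝ := ∑' n : ℤ, z ^ n / (1 - a * p ^ n)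

/-- The factor depending on `a` alone in `θ(z) L(z, a) = Ph(a) θ(z a)`. -/
noncomputable def Ph (p a : ℝ) : ℝ := ∑' n : ℤ, (-1) ^ n * p ^ tri (n + 1) / (1 - a * p ^ n)

lemma summable_L_nat {p z a : ℝ} (hp : 0 < p) (hp1 : p < 1) (hz : 0 < z) (hz1 : z < 1)
    (h : ∀ n : ℕ, 1 - a * p ^ n ≠ 0) : Summable fun n : ℕ => z ^ n / (1 - a * p ^ n) := by
  refine summable_of_ratio_test_tendsto_lt_one (l := z) hz1
    (Filter.Eventually.of_forall fun n => div_ne_zero (by positivity) (h n)) ?_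
  have e : (fun n : ℕ => ‖z ^ (n + 1) / (1 - a * p ^ (n + 1))‖ / ‖z ^ n / (1 - a * p ^ n)‖) =
      fun n : ℕ => z * (‖1 - a * p ^ n‖ / ‖1 - a * p ^ (n + 1)‖) := by
    funext n
    have h1 := norm_ne_zero_iff.2 (h n)
    have h2 := norm_ne_zero_iff.2 (h (n + 1))
    rw [norm_div, norm_div, Real.norm_of_nonneg (pow_nonneg hz.le _),
      Real.norm_of_nonneg (pow_nonneg hz.le _)]
    field_simp
    ring
  rw [e]
  have t : Filter.Tendsto (fun n : ℕ => ‖1 - a * p ^ n‖) Filter.atTop (nhds 1) := by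
    have := (((tendsto_pow_atTop_nhds_zero_of_lt_one hp.le hp1).const_mul a).const_sub 1).norm
    simpa using this
  have := ((t.div (t.comp (Filter.tendsto_add_atTop_nat 1)) one_ne_zero).const_mul z)
  simpa using this

lemma L_neg_term {p z a : ℝ} (hp : 0 < p) (hz : 0 < z) (ha : 0 < a) (n : ℕ)
    (h : 1 - a * p ^ (-(n : ℤ)) ≠ 0) :
    1 - a⁻¹ * p ^ n ≠ 0 ∧ z ^ (-(n : ℤ)) / (1 - a * p ^ (-(n : ℤ))) =
      -a⁻¹ * ((p / z) ^ n / (1 - a⁻¹ * p ^ n)) := by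
  have h0 : 1 - a * p ^ (-(n : ℤ)) = -(a * p ^ (-(n : ℤ))) * (1 - a⁻¹ * p ^ n) := by
    rw [zpow_neg, zpow_natCast]
    field_simp
    ring
  have h1 : 1 - a⁻¹ * p ^ n ≠ 0 := fun h' => h (by rw [h0, h', mul_zero])
  refine ⟨h1, ?_⟩
  rw [h0, zpow_neg, zpow_natCast, zpow_neg, zpow_natCast, div_pow]
  generalize 1 - a⁻¹ * p ^ n = D at *
  field_simp

lemma summable_L {p z a : ℝ} (hp : 0 < p) (hpz : p < z) (hz1 : z < 1) (ha : 0 < a)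
    (h : ∀ n : ℤ, 1 - a * p ^ n ≠ 0) : Summable fun n : ℤ => z ^ n / (1 - a * p ^ n) := by
  have hz : 0 < z := hp.trans hpz
  have hp1 : p < 1 := hpz.trans hz1
  refine Summable.of_nat_of_neg ?_ ?_
  · simpa using summable_L_nat hp hp1 hz hz1 fun n => by simpa using h n
  · have h1 : ∀ n : ℕ, 1 - a⁻¹ * p ^ n ≠ 0 := fun n => (L_neg_term hp hz ha n (h _)).1
    have := (summable_L_nat hp hp1 (z := p / z) (by positivity) ((div_lt_one hz).2 hpz) h1)
    exact (this.mul_left (-a⁻¹)).congr fun n => (L_neg_term hp hz ha n (h _)).2.symm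

/-- Multiplying the Lambert series by `θ(z)` and collecting powers of `z` gives inner sums that
satisfy a two-term recurrence, because `θ` vanishes at all powers of `p`. -/
lemma th_mul_L {p z a : ℝ} (hp : 0 < p) (hpz : p < z) (hz1 : z < 1) (ha : 0 < a)
    (h : ∀ n : ℤ, 1 - a * p ^ n ≠ 0) : th p z * L p z a = Ph p a * th p (z * a) := by
  have hz : 0 < z := hp.trans hpz
  have hp1 : p < 1 := hpz.trans hz1
  have hz' : -z ≠ 0 := neg_ne_zero.2 hz.ne'
  have s1 := summable_S hp hp1 hz'
  have s2 := summable_L hp hpz hz1 ha h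
  have hs := summable_mul_of_summable_norm s1.norm s2.norm
  let e : ℤ × ℤ ≃ ℤ × ℤ :=
    ⟨fun u => (u.1 - u.2, u.2), fun u => (u.1 + u.2, u.2), fun u => by simp, fun u => by simp⟩
  have hs' := (e.summable_iff).2 hs
  let g : ℤ → ℤ → ℝ := fun N n => (-1) ^ n * p ^ (tri (n + 1) - N * n) / (1 - a * p ^ n)
  have key : ∀ N n : ℤ, p ^ tri (N - n) * (-z) ^ (N - n) * (z ^ n / (1 - a * p ^ n)) =
      p ^ tri N * (-z) ^ N * g N n := by
    intro N n
    have e1 : tri (N - n) = tri N + (tri (n + 1) - N * n) := by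
      apply tri_eq
      have h1 := two_mul_tri N
      have h2 := two_mul_tri (n + 1)
      linear_combination h1 + h2
    have e2 : (-z) ^ (N - n) * z ^ n = (-z) ^ N * (-1) ^ n := by
      rw [zpow_sub₀ hz', neg_eq_neg_one_mul z, mul_zpow, mul_zpow]
      have : ((-1 : ℝ) ^ n) * (-1) ^ n = 1 := by
        rw [← mul_zpow]; norm_num
      field_simp
      linear_combination -this
    simp only [g]
    rw [e1, zpow_add₀ hp.ne']
    linear_combination (p ^ tri N * p ^ (tri (n + 1) - N * n) / (1 - a * p ^ n)) * e2
  have gs : ∀ N, Summable (g N) := by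
    intro N
    have h1 := hs'.prod_factor N
    have h2 : p ^ tri N * (-z) ^ N ≠ 0 := by positivity
    refine (h1.mul_left (p ^ tri N * (-z) ^ N)⁻¹).congr fun n => ?_
    simp only [e, Function.comp, Equiv.coe_fn_mk]
    rw [key, ← mul_assoc, inv_mul_cancel₀ h2, one_mul]
  have g0 : ∑' n, g 0 n = Ph p a := by
    simp [g, Ph]
  have hrec : ∀ N, ∑' n, g (N + 1) n = a * ∑' n, g N n := by
    intro N
    have t1 := hasSum_th hp hp1 (z := p ^ (-N)) (by positivity)
    rw [th_zpow hp] at t1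
    have t2 := ((gs N).hasSum.mul_left a).add t1
    rw [add_zero] at t2
    rw [← t2.tsum_eq]
    refine tsum_congr fun n => ?_
    have e3 : (-p ^ (-N)) ^ n = (-1) ^ n * p ^ (-N * n) := by
      rw [neg_eq_neg_one_mul, mul_zpow, zpow_mul]
    simp only [g]
    rw [e3, show tri (n + 1) - (N + 1) * n = tri n + -N * n by rw [tri_succ]; ring,
      show tri (n + 1) - N * n = tri n + -N * n + n by rw [tri_succ]; ring, zpow_add₀ hp.ne' _ n,
      zpow_add₀ hp.ne']
    have := h n
    field_simp
    ring
  have gN : ∀ N, ∑' n, g N n = a ^ N * Ph p a := by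
    intro N
    induction N using Int.induction_on with
    | zero => simp [g0]
    | succ n ih => rw [hrec, ih, zpow_add_one₀ ha.ne']; ring
    | pred n ih =>
      have := hrec (-(n : ℤ) - 1)
      rw [sub_add_cancel, ih] at this
      rw [zpow_sub_one₀ ha.ne']
      field_simp
      linarith
  unfold L
  rw [th, S, tsum_mul_tsum_of_summable_norm s1.norm s2.norm, ← e.tsum_eq]
  refine hs'.tsum_prod.trans ?_
  rw [th, S, ← tsum_mul_left]
  refine tsum_congr fun N => ?_
  simp only [e, Function.comp, Equiv.coe_fn_mk]
  simp_rw [key]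
  rw [tsum_mul_left, gN, ← neg_mul, mul_zpow]
  ring

/-- The term of the double series for `L`, symmetric under swapping `z` and `a`. -/
noncomputable def K (p z a : ℝ) (u : ℕ × ℕ) : ℝ :=
  z ^ u.1 * a ^ u.2 * p ^ (u.1 * u.2) -
    (p / z) ^ (u.1 + 1) * (p / a) ^ (u.2 + 1) * p ^ (u.1 * u.2) / p

lemma summable_geom_double {p x y : ℝ} (hp : 0 < p) (hp1 : p < 1) (hx : 0 < x) (hx1 : x < 1)
    (hy : 0 < y) (hy1 : y < 1) :
    Summable fun u : ℕ × ℕ => x ^ u.1 * y ^ u.2 * p ^ (u.1 * u.2) := by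
  have := (summable_geometric_of_lt_one hx.le hx1).mul_of_nonneg
    (summable_geometric_of_lt_one hy.le hy1) (fun n => by positivity) (fun n => by positivity)
  refine Summable.of_nonneg_of_le (fun u => by positivity) (fun u => ?_) this
  exact mul_le_of_le_one_right (by positivity) (pow_le_one₀ hp.le hp1.le)

lemma one_sub_ne {p a : ℝ} (hp : 0 < p) (hpa : p < a) (ha1 : a < 1) (n : ℤ) :
    1 - a * p ^ n ≠ 0 := by
  have ha : 0 < a := hp.trans hpa
  have hp1 : p < 1 := hpa.trans ha1
  rcases le_or_gt 0 n with hn | hn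
  · have : p ^ n ≤ 1 := by
      lift n to ℕ using hn
      simpa using pow_le_one₀ hp.le hp1.le
    have := mul_le_of_le_one_right ha.le this
    exact (by linarith : 0 < 1 - a * p ^ n).ne'
  · have h1 : p ^ (-1 : ℤ) ≤ p ^ n := zpow_le_zpow_right_of_le_one₀ hp hp1.le (by omega)
    have h2 : 1 < a * p ^ (-1 : ℤ) := by
      rw [zpow_neg_one, ← div_eq_mul_inv]
      exact (one_lt_div hp).2 hpa
    have := mul_le_mul_of_nonneg_left h1 ha.le
    exact (by linarith : 1 - a * p ^ n < 0).ne

lemma hasSum_K {p z a : ℝ} (hp : 0 < p) (hpz : p < z) (hz1 : z < 1) (hpa : p < a) (ha1 : a < 1) :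
    HasSum (K p z a) (L p z a) := by
  have hz : 0 < z := hp.trans hpz
  have ha : 0 < a := hp.trans hpa
  have hp1 : p < 1 := hpz.trans hz1
  have k1 := summable_geom_double hp hp1 hz hz1 ha ha1
  have k2 : Summable fun u : ℕ × ℕ =>
      (p / z) ^ (u.1 + 1) * (p / a) ^ (u.2 + 1) * p ^ (u.1 * u.2) / p := by
    have := (summable_geom_double hp hp1 (div_pos hp hz) ((div_lt_one hz).2 hpz) (div_pos hp ha)
      ((div_lt_one ha).2 hpa)).mul_left (p / z * (p / a) / p)
    refine this.congr fun u => ?_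
    rw [pow_succ, pow_succ]
    ring
  have hne := one_sub_ne hp hpa ha1
  have f1 : ∀ n : ℕ, ∑' m : ℕ, z ^ n * a ^ m * p ^ (n * m) =
      z ^ (n : ℤ) / (1 - a * p ^ (n : ℤ)) := by
    intro n
    have hlt : a * p ^ n < 1 := lt_of_le_of_lt
      (mul_le_of_le_one_right ha.le (pow_le_one₀ hp.le hp1.le)) ha1
    rw [zpow_natCast, zpow_natCast, div_eq_mul_inv,
      ← tsum_geometric_of_lt_one (by positivity) hlt, ← tsum_mul_left]
    refine tsum_congr fun m => ?_
    rw [mul_pow, ← pow_mul]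
    ring
  have f2 : ∀ n : ℕ, ∑' m : ℕ, (p / z) ^ (n + 1) * (p / a) ^ (m + 1) * p ^ (n * m) / p =
      -(z ^ (-((n : ℤ) + 1)) / (1 - a * p ^ (-((n : ℤ) + 1)))) := by
    intro n
    have hlt : a⁻¹ * p ^ (n + 1) < 1 := by
      have h1 : p ^ (n + 1) ≤ p := by
        rw [pow_succ]
        exact mul_le_of_le_one_left hp.le (pow_le_one₀ hp.le hp1.le)
      rw [inv_mul_lt_iff₀ ha]
      linarith
    have e1 := (L_neg_term hp hz ha (n + 1) (hne _)).2
    push_cast at e1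
    rw [e1, div_eq_mul_inv _ (1 - a⁻¹ * p ^ (n + 1)),
      ← tsum_geometric_of_lt_one (by positivity) hlt, ← tsum_mul_left, ← tsum_mul_left,
      ← tsum_neg]
    refine tsum_congr fun m => ?_
    rw [mul_pow, ← pow_mul, div_pow p a, inv_pow, Nat.succ_mul, pow_add p (n * m) m]
    field_simp
    ring
  have g1 : HasSum (fun n : ℕ => z ^ (n : ℤ) / (1 - a * p ^ (n : ℤ)))
      (∑' u : ℕ × ℕ, z ^ u.1 * a ^ u.2 * p ^ (u.1 * u.2)) := by
    have := k1.hasSum.prod_fiberwise fun n => (k1.prod_factor n).hasSum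
    simpa only [f1] using this
  have g2 : HasSum (fun n : ℕ => z ^ (-((n : ℤ) + 1)) / (1 - a * p ^ (-((n : ℤ) + 1))))
      (-∑' u : ℕ × ℕ, (p / z) ^ (u.1 + 1) * (p / a) ^ (u.2 + 1) * p ^ (u.1 * u.2) / p) := by
    have := (k2.hasSum.prod_fiberwise fun n => (k2.prod_factor n).hasSum).neg
    simpa only [f2, neg_neg] using this
  have g := HasSum.of_nat_of_neg_add_one (f := fun n : ℤ => z ^ n / (1 - a * p ^ n)) g1 g2
  rw [L, g.tsum_eq, ← sub_eq_add_neg]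
  exact k1.hasSum.sub k2.hasSum

/-- Both sides have the symmetric expansion `K` as a double series. -/
lemma L_symm {p z a : ℝ} (hp : 0 < p) (hpz : p < z) (hz1 : z < 1) (hpa : p < a) (ha1 : a < 1) :
    L p z a = L p a z := by
  have h1 := hasSum_K hp hpz hz1 hpa ha1
  have h2 := hasSum_K hp hpa ha1 hpz hz1
  have h3 := ((Equiv.prodComm ℕ ℕ).hasSum_iff).2 h2
  refine h1.unique ?_
  convert h3 using 1
  funext u
  simp only [K, Function.comp, Equiv.prodComm_apply, Prod.fst_swap, Prod.snd_swap]
  rw [mul_comm u.2 u.1]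
  ring

lemma L_pos {p z a : ℝ} (hp : 0 < p) (hpz : p ≤ z ^ 2) (hz1 : z < 1) (hpa : p ≤ a ^ 2)
    (ha1 : a < 1) (hz : 0 < z) (ha : 0 < a) (hza : p < z * a) : 0 < L p z a := by
  have hpz' : p < z := by nlinarith
  have hpa' : p < a := by nlinarith
  have h := hasSum_K hp hpz' hz1 hpa' ha1
  have hk : ∀ u, 0 < K p z a u := by
    rintro ⟨k, m⟩
    simp only [K]
    have e1 : (p / z) ^ (k + 1) * (p / a) ^ (m + 1) * p ^ (k * m) / p =
        (p / z) ^ k * (p / a) ^ m * p ^ (k * m) * (p / (z * a)) := by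
      rw [pow_succ, pow_succ]
      field_simp
    have e2 : (p / z) ^ k ≤ z ^ k :=
      pow_le_pow_left₀ (by positivity) (by rw [div_le_iff₀ hz]; nlinarith) k
    have e3 : (p / a) ^ m ≤ a ^ m :=
      pow_le_pow_left₀ (by positivity) (by rw [div_le_iff₀ ha]; nlinarith) m
    have e4 : p / (z * a) < 1 := (div_lt_one (by positivity)).2 hza
    have e5 : (p / z) ^ k * (p / a) ^ m * p ^ (k * m) ≤ z ^ k * a ^ m * p ^ (k * m) := by gcongr
    have e6 : 0 < z ^ k * a ^ m * p ^ (k * m) := by positivity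
    have e7 : 0 < p / (z * a) := by positivity
    rw [e1]
    nlinarith
  exact h.tsum_eq ▸ h.summable.tsum_pos (fun u => (hk u).le) (0, 0) (hk _)

lemma L_dissect {p z a : ℝ} (hp : 0 < p) (hpz : p < z) (hz1 : z < 1) (ha : 0 < a)
    (h : ∀ n : ℤ, 1 - a * p ^ n ≠ 0) :
    L p z a = ∑ i : Fin 5, z ^ (i : ℕ) * L (p ^ 5) (z ^ 5) (a * p ^ (i : ℕ)) := by
  have hz : 0 < z := hp.trans hpz
  have s := summable_L hp hpz hz1 ha h
  let e : Fin 5 × ℤ → ℤ := fun u => u.1 + 5 * u.2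
  have he : Function.Bijective e := by
    constructor
    · rintro ⟨⟨i, hi⟩, m⟩ ⟨⟨j, hj⟩, n⟩ h
      simp only [e] at h
      have h1 : i = j := by omega
      have h2 : m = n := by omega
      subst h1 h2
      rfl
    · intro n
      refine ⟨(⟨(n % 5).toNat, by omega⟩, n / 5), ?_⟩
      simp only [e]
      omega
  rw [L, tsum_split e he s]
  refine Finset.sum_congr rfl fun i _ => ?_
  rw [L, ← tsum_mul_left]
  refine tsum_congr fun m => ?_
  simp only [e]
  rw [zpow_add₀ hz.ne', zpow_add₀ hp.ne', zpow_natCast, zpow_natCast, zpow_mul, zpow_mul]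
  norm_cast
  ring

/-! ### Euler's expansions and Jacobi's triple product -/

/-- The infinite product `(a; p)_∞` over the reals. -/
noncomputable def Q (a p : ℝ) : ℝ := ∏' k : ℕ, (1 - a * p ^ k)

/-- The finite product `(p; p)_n`. -/
noncomputable def qf (p : ℝ) (n : ℕ) : ℝ := ∏ k ∈ Finset.range n, (1 - p ^ (k + 1))

lemma summable_Q {p : ℝ} (hp : 0 < p) (hp1 : p < 1) (a : ℝ) :
    Summable fun k : ℕ => ‖-(a * p ^ k)‖ := by
  have := (summable_geometric_of_lt_one hp.le hp1).mul_left |a|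
  refine this.congr fun k => ?_
  rw [norm_neg, norm_mul, Real.norm_of_nonneg (pow_nonneg hp.le k), Real.norm_eq_abs]

lemma multipliable_Q {p : ℝ} (hp : 0 < p) (hp1 : p < 1) (a : ℝ) :
    Multipliable fun k : ℕ => 1 - a * p ^ k := by
  simpa only [sub_eq_add_neg] using multipliable_one_add_of_summable (summable_Q hp hp1 a)

lemma Q_prod {p : ℝ} (hp : 0 < p) (hp1 : p < 1) (a : ℝ) (n : ℕ) :
    Q a p = (∏ k ∈ Finset.range n, (1 - a * p ^ k)) * Q (a * p ^ n) p := by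
  have h : Multipliable fun k : ℕ => 1 - a * p ^ (k + n) := by
    refine (multipliable_Q hp hp1 (a * p ^ n)).congr fun k => ?_
    ring
  rw [Q, ← h.prod_mul_tprod_nat_mul' (f := fun k => 1 - a * p ^ k), Q]
  congr 1
  refine tprod_congr fun k => ?_
  ring

lemma Q_succ {p : ℝ} (hp : 0 < p) (hp1 : p < 1) (a : ℝ) : Q a p = (1 - a) * Q (a * p) p := by
  simpa using Q_prod hp hp1 a 1

lemma Q_split {p : ℝ} (hp : 0 < p) (hp1 : p < 1) (a : ℝ) :
    Q a p = Q a (p ^ 2) * Q (a * p) (p ^ 2) := by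
  have hp2 : 0 < p ^ 2 := by positivity
  have hp21 : p ^ 2 < 1 := by nlinarith
  have h1 : ∀ k : ℕ, 1 - a * p ^ (2 * k) = 1 - a * (p ^ 2) ^ k := fun k => by rw [pow_mul]
  have h2 : ∀ k : ℕ, 1 - a * p ^ (2 * k + 1) = 1 - a * p * (p ^ 2) ^ k := fun k => by
    rw [pow_succ, pow_mul]; ring
  unfold Q
  rw [← tprod_even_mul_odd (f := fun k => 1 - a * p ^ k)]
  · simp only [h1, h2]
  · simpa only [h1] using multipliable_Q hp2 hp21 a
  · simpa only [h2] using multipliable_Q hp2 hp21 (a * p)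

lemma Q_pos {p a : ℝ} (hp : 0 < p) (hp1 : p < 1) (ha : a < 1) : 0 < Q a p := by
  have hf : ∀ k : ℕ, 0 < 1 - a * p ^ k := by
    intro k
    have h1 : p ^ k ≤ 1 := pow_le_one₀ hp.le hp1.le
    have h2 : 0 < p ^ k := by positivity
    rcases le_or_gt 0 a with h | h <;> nlinarith
  have h0 : Q a p ≠ 0 := by
    simpa only [sub_eq_add_neg, Q] using tprod_one_add_ne_zero_of_summable
      (f := fun k : ℕ => -(a * p ^ k)) (fun k => by simpa only [← sub_eq_add_neg] using (hf k).ne')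
      (summable_Q hp hp1 a)
  refine lt_of_le_of_ne ?_ h0.symm
  exact ge_of_tendsto' (multipliable_Q hp hp1 a).tendsto_prod_tprod_nat
    fun n => Finset.prod_nonneg fun k _ => (hf k).le

lemma Q_zero {p : ℝ} (hp : 0 < p) (n : ℤ) (hn : n < 0) : Q (p ^ (n + 1)) p = 0 := by
  have h : ∃ k : ℕ, 1 - p ^ (n + 1) * p ^ k = 0 := by
    refine ⟨(-n - 1).toNat, ?_⟩
    have : (((-n - 1).toNat : ℕ) : ℤ) = -n - 1 := by omega
    rw [← zpow_natCast, this, ← zpow_add₀ hp.ne']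
    simp
  exact tprod_of_exists_eq_zero h

lemma one_sub_pow_pos {p : ℝ} (hp : 0 < p) (hp1 : p < 1) (n : ℕ) : 0 < 1 - p ^ (n + 1) :=
  sub_pos.2 (pow_lt_one₀ hp.le hp1 (Nat.succ_ne_zero n))

lemma qf_pos {p : ℝ} (hp : 0 < p) (hp1 : p < 1) (n : ℕ) : 0 < qf p n :=
  Finset.prod_pos fun k _ => one_sub_pow_pos hp hp1 k

lemma qf_succ (p : ℝ) (n : ℕ) : qf p (n + 1) = qf p n * (1 - p ^ (n + 1)) :=
  Finset.prod_range_succ _ _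

lemma qf_mul_Q {p : ℝ} (hp : 0 < p) (hp1 : p < 1) (n : ℕ) :
    qf p n * Q (p ^ (n + 1)) p = Q p p := by
  rw [Q_prod hp hp1 p n, qf]
  simp only [pow_succ']

lemma tendsto_series {p z : ℝ} (hp : 0 < p) (hp1 : p < 1) {c : ℕ → ℝ}
    (hc : Summable fun n => ‖c n * z ^ n‖) :
    Filter.Tendsto (fun k : ℕ => ∑' n, c n * (z * p ^ k) ^ n) Filter.atTop (nhds (c 0)) := by
  have h := tendsto_tsum_of_dominated_convergence (𝓕 := Filter.atTop)
    (f := fun (k : ℕ) n => c n * (z * p ^ k) ^ n) (g := fun n => c n * 0 ^ n) hc ?_ ?_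
  · rwa [tsum_eq_single 0 fun n hn => by simp [hn], pow_zero, mul_one] at h
  · intro n
    have := ((tendsto_pow_atTop_nhds_zero_of_lt_one hp.le hp1).const_mul z).pow n
    simpa using this.const_mul (c n)
  · refine Filter.Eventually.of_forall fun k n => ?_
    rw [mul_pow, ← mul_assoc, norm_mul]
    refine mul_le_of_le_one_right (norm_nonneg _) ?_
    rw [Real.norm_of_nonneg (by positivity)]
    exact pow_le_one₀ (by positivity) (pow_le_one₀ hp.le hp1.le)

/-- Coefficient of Euler's expansion of `(z; p)_∞`. -/
noncomputable def ec (p : ℝ) (n : ℕ) : ℝ := (-1) ^ n * p ^ tri n / qf p n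

lemma ec_succ {p : ℝ} (hp : 0 < p) (hp1 : p < 1) (n : ℕ) :
    ec p (n + 1) * (1 - p ^ (n + 1)) = -p ^ n * ec p n := by
  have h1 := (qf_pos hp hp1 n).ne'
  have h2 := (one_sub_pow_pos hp hp1 n).ne'
  unfold ec
  rw [qf_succ]
  push_cast
  rw [tri_succ, zpow_add₀ hp.ne', zpow_natCast]
  field_simp
  ring

lemma summable_ec {p : ℝ} (hp : 0 < p) (hp1 : p < 1) (z : ℝ) :
    Summable fun n => ‖ec p n * z ^ n‖ := by
  rcases eq_or_ne z 0 with rfl | hz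
  · refine summable_of_ne_finset_zero (s := {0}) fun n hn => ?_
    rw [Finset.mem_singleton] at hn
    simp [hn]
  have h0 : ∀ n, ec p n ≠ 0 := fun n =>
    div_ne_zero (mul_ne_zero (by simp) (by positivity)) (qf_pos hp hp1 n).ne'
  refine summable_of_ratio_test_tendsto_lt_one (l := 0) zero_lt_one
    (Filter.Eventually.of_forall fun n => norm_ne_zero_iff.2 (mul_ne_zero (h0 n) (by positivity))) ?_
  have h : (fun n : ℕ => ‖‖ec p (n + 1) * z ^ (n + 1)‖‖ / ‖‖ec p n * z ^ n‖‖) =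
      fun n : ℕ => ‖p ^ n * z / (1 - p ^ (n + 1))‖ := by
    funext n
    have h2 := (one_sub_pow_pos hp hp1 n).ne'
    have : ec p (n + 1) * z ^ (n + 1) = -(p ^ n * z / (1 - p ^ (n + 1))) * (ec p n * z ^ n) := by
      have := ec_succ hp hp1 n
      rw [eq_div_of_mul_eq h2 this]
      field_simp
      ring
    rw [norm_norm, norm_norm, this, norm_mul, mul_div_assoc,
      div_self (norm_ne_zero_iff.2 (mul_ne_zero (h0 n) (by positivity))), mul_one, norm_neg]
  rw [h]
  have t := tendsto_pow_atTop_nhds_zero_of_lt_one hp.le hp1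
  have t2 := (t.comp (Filter.tendsto_add_atTop_nat 1)).const_sub 1
  have := ((t.mul_const z).div t2 (by norm_num)).norm
  simpa using this

/-- Euler's expansion of `(z; p)_∞`. -/
lemma hasSum_Q {p : ℝ} (hp : 0 < p) (hp1 : p < 1) (z : ℝ) :
    HasSum (fun n => ec p n * z ^ n) (Q z p) := by
  have hs : ∀ z, Summable fun n => ec p n * z ^ n := fun z => (summable_ec hp hp1 z).of_norm
  have step : ∀ z, ∑' n, ec p n * z ^ n = (1 - z) * ∑' n, ec p n * (z * p) ^ n := by
    intro z
    have h1 := (hs z).sub (hs (z * p))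
    have h2 : ∑' n, (ec p n * z ^ n - ec p n * (z * p) ^ n) = -z * ∑' n, ec p n * (z * p) ^ n := by
      rw [h1.tsum_eq_zero_add, ← tsum_mul_left]
      simp only [pow_zero, mul_one, sub_self, zero_add]
      refine tsum_congr fun n => ?_
      have := ec_succ hp hp1 n
      rw [mul_pow, mul_pow]
      linear_combination z ^ (n + 1) * this
    rw [(hs z).tsum_sub (hs (z * p))] at h2
    linarith
  have iter : ∀ N : ℕ, ∑' n, ec p n * z ^ n =
      (∏ k ∈ Finset.range N, (1 - z * p ^ k)) * ∑' n, ec p n * (z * p ^ N) ^ n := by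
    intro N
    induction N with
    | zero => simp
    | succ N ih => rw [ih, step (z * p ^ N), Finset.prod_range_succ, pow_succ]; ring_nf
  have lim := (multipliable_Q hp hp1 z).tendsto_prod_tprod_nat.mul
    (tendsto_series hp hp1 (summable_ec hp hp1 z))
  have e0 : ec p 0 = 1 := by simp [ec, qf]
  have := tendsto_nhds_unique (lim.congr fun N => (iter N).symm) tendsto_const_nhds
  rw [e0, mul_one] at this
  rw [Q, this]
  exact (hs z).hasSum

lemma summable_inv_qf {p z : ℝ} (hp : 0 < p) (hp1 : p < 1) (hz : 0 < z) (hz1 : z < 1) :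
    Summable fun n => ‖1 / qf p n * z ^ n‖ := by
  have h0 : ∀ n, 1 / qf p n ≠ 0 := fun n => one_div_ne_zero (qf_pos hp hp1 n).ne'
  refine summable_of_ratio_test_tendsto_lt_one (l := z) hz1
    (Filter.Eventually.of_forall fun n => norm_ne_zero_iff.2 (mul_ne_zero (h0 n) (by positivity))) ?_
  have h : (fun n : ℕ => ‖‖1 / qf p (n + 1) * z ^ (n + 1)‖‖ / ‖‖1 / qf p n * z ^ n‖‖) =
      fun n : ℕ => ‖z / (1 - p ^ (n + 1))‖ := by
    funext n
    have h2 := (one_sub_pow_pos hp hp1 n).ne'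
    have : 1 / qf p (n + 1) * z ^ (n + 1) = (z / (1 - p ^ (n + 1))) * (1 / qf p n * z ^ n) := by
      rw [qf_succ]
      field_simp
      ring
    rw [norm_norm, norm_norm, this, norm_mul, mul_div_assoc,
      div_self (norm_ne_zero_iff.2 (mul_ne_zero (h0 n) (by positivity))), mul_one]
  rw [h]
  have t := tendsto_pow_atTop_nhds_zero_of_lt_one hp.le hp1
  have t2 := (t.comp (Filter.tendsto_add_atTop_nat 1)).const_sub 1
  have := ((tendsto_const_nhds (x := z)).div t2 (by norm_num)).norm
  simpa [abs_of_pos hz] using this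

/-- Euler's expansion of `1 / (z; p)_∞`. -/
lemma hasSum_inv_Q {p z : ℝ} (hp : 0 < p) (hp1 : p < 1) (hz : 0 < z) (hz1 : z < 1) :
    HasSum (fun n => 1 / qf p n * z ^ n) (Q z p)⁻¹ := by
  have hs : ∀ z, 0 < z → z < 1 → Summable fun n => 1 / qf p n * z ^ n :=
    fun z h h' => (summable_inv_qf hp hp1 h h').of_norm
  have step : ∀ z, 0 < z → z < 1 →
      (1 - z) * ∑' n, 1 / qf p n * z ^ n = ∑' n, 1 / qf p n * (z * p) ^ n := by
    intro z hz hz1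
    have s1 := hs z hz hz1
    have s2 := hs (z * p) (by positivity) (by nlinarith)
    have h1 := s1.sub s2
    have h2 : ∑' n, (1 / qf p n * z ^ n - 1 / qf p n * (z * p) ^ n) =
        z * ∑' n, 1 / qf p n * z ^ n := by
      rw [h1.tsum_eq_zero_add, ← tsum_mul_left]
      simp only [pow_zero, mul_one, sub_self, zero_add]
      refine tsum_congr fun n => ?_
      have a1 := (one_sub_pow_pos hp hp1 n).ne'
      have a2 := (qf_pos hp hp1 n).ne'
      rw [qf_succ, mul_pow]
      field_simp
      ring
    rw [s1.tsum_sub s2] at h2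
    linarith
  have iter : ∀ N : ℕ, (∏ k ∈ Finset.range N, (1 - z * p ^ k)) * ∑' n, 1 / qf p n * z ^ n =
      ∑' n, 1 / qf p n * (z * p ^ N) ^ n := by
    intro N
    induction N with
    | zero => simp
    | succ N ih =>
      have hlt : z * p ^ N < 1 :=
        lt_of_le_of_lt (mul_le_of_le_one_right hz.le (pow_le_one₀ hp.le hp1.le)) hz1
      have := step (z * p ^ N) (by positivity) hlt
      rw [← ih] at this
      rw [Finset.prod_range_succ, pow_succ, ← mul_assoc z, ← this]
      ring
  have lim := (multipliable_Q hp hp1 z).tendsto_prod_tprod_nat.mul_const (∑' n, 1 / qf p n * z ^ n)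
  have e0 : 1 / qf p 0 = 1 := by simp [qf]
  have := tendsto_nhds_unique (lim.congr iter) (tendsto_series hp hp1 (summable_inv_qf hp hp1 hz hz1))
  rw [e0] at this
  rw [Q, inv_eq_of_mul_eq_one_right this]
  exact (hs z hz hz1).hasSum

/-- The Jacobi triple product. Expanding `(p ^ (n + 1); p)_∞` by Euler's formula in
`∑ (-z) ^ n p ^ (n (n - 1) / 2) (p ^ (n + 1); p)_∞` and collecting powers of `z` produces
`θ(z) / (p / z; p)_∞`; the terms with `n < 0` vanish and the rest sum to
`(p; p)_∞ (z; p)_∞`. -/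
lemma jtp {p z : ℝ} (hp : 0 < p) (hpz : p < z) (hz1 : z < 1) :
    th p z = Q p p * Q z p * Q (p / z) p := by
  have hz : 0 < z := hp.trans hpz
  have hp1 : p < 1 := hpz.trans hz1
  have hz' : -z ≠ 0 := neg_ne_zero.2 hz.ne'
  have hpz0 : 0 < p / z := by positivity
  have hpz1 : p / z < 1 := (div_lt_one hz).2 hpz
  have s1 := summable_S hp hp1 hz'
  have s2 := summable_inv_qf hp hp1 hpz0 hpz1
  have hs := summable_mul_of_summable_norm s1.norm s2
  let e : ℤ × ℕ ≃ ℤ × ℕ :=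
    ⟨fun u => (u.1 + u.2, u.2), fun u => (u.1 - u.2, u.2), fun u => by simp, fun u => by simp⟩
  have hs' := (e.summable_iff).2 hs
  have key : ∀ (n : ℤ) (m : ℕ), p ^ tri (n + m) * (-z) ^ (n + m) * (1 / qf p m * (p / z) ^ m) =
      p ^ tri n * (-z) ^ n * (ec p m * (p ^ (n + 1)) ^ m) := by
    intro n m
    have hq := (qf_pos hp hp1 m).ne'
    have h1 : (p ^ (n + 1)) ^ m = p ^ (n * m) * p ^ m := by
      rw [← zpow_natCast, ← zpow_mul, add_mul, one_mul, zpow_add₀ hp.ne', zpow_natCast]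
    rw [tri_add, zpow_add₀ hp.ne', zpow_add₀ hp.ne', zpow_add₀ hz', h1, ec, zpow_natCast (-z), neg_pow,
      div_pow]
    field_simp
  have inner : ∀ n : ℤ, ∑' m : ℕ, p ^ tri (n + m) * (-z) ^ (n + m) * (1 / qf p m * (p / z) ^ m) =
      p ^ tri n * (-z) ^ n * Q (p ^ (n + 1)) p := by
    intro n
    simp_rw [key]
    rw [tsum_mul_left, (hasSum_Q hp hp1 _).tsum_eq]
  have total : th p z * (Q (p / z) p)⁻¹ = ∑' n : ℤ, p ^ tri n * (-z) ^ n * Q (p ^ (n + 1)) p := by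
    rw [th, S, ← (hasSum_inv_Q hp hp1 hpz0 hpz1).tsum_eq,
      tsum_mul_tsum_of_summable_norm s1.norm s2, ← e.tsum_eq]
    exact hs'.tsum_prod.trans (tsum_congr inner)
  have right : ∑' n : ℤ, p ^ tri n * (-z) ^ n * Q (p ^ (n + 1)) p = Q p p * Q z p := by
    rw [← (hasSum_Q hp hp1 z).tsum_eq, ← tsum_mul_left,
      ← (Nat.cast_injective (R := ℤ)).tsum_eq]
    · refine tsum_congr fun n => ?_
      have h1 := qf_mul_Q hp hp1 n
      have hq := (qf_pos hp hp1 n).ne'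
      have h2 : p ^ ((n : ℤ) + 1) = p ^ (n + 1) := by norm_cast
      rw [h2, ← h1, ec, zpow_natCast, neg_pow]
      field_simp
    · intro n hn
      rw [Function.mem_support] at hn
      have : 0 ≤ n := by
        by_contra! h
        exact hn (by rw [Q_zero hp n h, mul_zero])
      exact ⟨n.toNat, by simp [this]⟩
  have hQ := (Q_pos hp hp1 hpz1).ne'
  rw [right] at total
  rw [← total]
  field_simp

lemma th_pos {p z : ℝ} (hp : 0 < p) (hpz : p < z) (hz1 : z < 1) : 0 < th p z := by
  have hz : 0 < z := hp.trans hpz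
  have hp1 : p < 1 := hpz.trans hz1
  rw [jtp hp hpz hz1]
  exact mul_pos (mul_pos (Q_pos hp hp1 hp1) (Q_pos hp hp1 hz1))
    (Q_pos hp hp1 ((div_lt_one hz).2 hpz))

/-! ### Theta functions to the base `t ^ 10` -/

/-- The theta function `θ(t ^ j)` to the base `t ^ 10`. -/
noncomputable def th10 (t : ℝ) (j : ℤ) : ℝ := th (t ^ 10) (t ^ j)

lemma th10_refl {t : ℝ} (ht : 0 < t) (j : ℤ) : th10 t (10 - j) = th10 t j := by
  have := th_refl (p := t ^ 10) (by positivity) (z := t ^ j) (by positivity)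
  unfold th10
  rw [← this, zpow_sub₀ ht.ne']
  norm_cast

lemma th10_add {t : ℝ} (ht : 0 < t) (j : ℤ) : th10 t (10 + j) = -th10 t j / t ^ j := by
  have := th_mul (p := t ^ 10) (by positivity) (z := t ^ j) (by positivity)
  unfold th10
  rw [← this, zpow_add₀ ht.ne']
  norm_cast

lemma th10_pos {t : ℝ} (ht : 0 < t) (ht1 : t < 1) (j : ℤ) (h0 : 0 < j) (h1 : j < 10) :
    0 < th10 t j := by
  have h2 : t ^ (10 : ℤ) < t ^ j := zpow_lt_zpow_right_of_lt_one₀ ht ht1 h1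
  have h3 : t ^ j < t ^ (0 : ℤ) := zpow_lt_zpow_right_of_lt_one₀ ht ht1 h0
  exact th_pos (by positivity) (by exact_mod_cast h2) (by simpa using h3)

/-- Weierstrass' three-term relation. -/
lemma three_term {t : ℝ} (ht : 0 < t) (ht1 : t < 1) (a b c d : ℤ) :
    t ^ b * (th10 t (a + b) * th10 t (a - b) * (th10 t (c + d) * th10 t (c - d))) -
      t ^ c * (th10 t (a + c) * th10 t (a - c) * (th10 t (b + d) * th10 t (b - d))) +
      t ^ c * (th10 t (a + d) * th10 t (a - d) * (th10 t (b + c) * th10 t (b - c))) = 0 := by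
  have h0 : (0 : ℝ) < t ^ 10 := by positivity
  have h1 : t ^ 10 < 1 := pow_lt_one₀ ht.le ht1 (by norm_num)
  have key : ∀ m n : ℤ, th10 t (m + n) * th10 t (m - n) =
      t ^ m * (t ^ m * S ((t ^ 10) ^ 2) ((t ^ 10) ^ 2 * (t ^ m) ^ 2) *
        S ((t ^ 10) ^ 2) (t ^ 10 * (t ^ n) ^ 2) - S ((t ^ 10) ^ 2) (t ^ 10 * (t ^ m) ^ 2) *
        (t ^ n * S ((t ^ 10) ^ 2) ((t ^ 10) ^ 2 * (t ^ n) ^ 2))) := by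
    intro m n
    rw [← th_mul_th h0 h1 (by positivity) (by positivity), ← zpow_add₀ ht.ne', ← zpow_sub₀ ht.ne']
    rfl
  simp only [key]
  ring

/-- The instances of the three-term relation used below, in terms of `θ(t), …, θ(t ^ 5)`, are
`rel0`, `rel1`, `rel2`, `rel4`, `rel5` and `rel6`. -/
lemma rel0 {t : ℝ} (ht : 0 < t) (ht1 : t < 1) :
    -th10 t 2 ^ 3 * th10 t 4 + th10 t 1 * th10 t 3 ^ 3 + t * th10 t 1 ^ 3 * th10 t 5 = 0 := by
  have h := three_term ht ht1 3 2 1 0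
  norm_num [zpow_ofNat] at h
  have := ht.ne'
  apply mul_left_cancel₀ this
  linear_combination h

lemma rel1 {t : ℝ} (ht : 0 < t) (ht1 : t < 1) :
    -th10 t 2 ^ 2 * th10 t 3 * th10 t 5 + th10 t 1 * th10 t 3 * th10 t 4 ^ 2 +
      t * th10 t 1 ^ 2 * th10 t 2 * th10 t 4 = 0 := by
  have h := three_term ht ht1 4 2 1 0
  have h6 := th10_refl ht 4
  norm_num [zpow_ofNat] at h h6
  rw [h6] at h
  apply mul_left_cancel₀ ht.ne'
  linear_combination h

lemma rel2 {t : ℝ} (ht : 0 < t) (ht1 : t < 1) :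
    -th10 t 2 ^ 2 * th10 t 4 ^ 2 + th10 t 1 * th10 t 3 * th10 t 5 ^ 2 +
      t * th10 t 1 ^ 2 * th10 t 3 ^ 2 = 0 := by
  have h := three_term ht ht1 5 2 1 0
  have h6 := th10_refl ht 4
  have h7 := th10_refl ht 3
  norm_num [zpow_ofNat] at h h6 h7
  rw [h6, h7] at h
  apply mul_left_cancel₀ ht.ne'
  linear_combination h

lemma rel4 {t : ℝ} (ht : 0 < t) (ht1 : t < 1) :
    -th10 t 3 ^ 2 * th10 t 4 ^ 2 + th10 t 2 * th10 t 4 * th10 t 5 ^ 2 +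
      t ^ 2 * th10 t 1 ^ 2 * th10 t 2 ^ 2 = 0 := by
  have h := three_term ht ht1 5 3 1 0
  have h6 := th10_refl ht 4
  have h8 := th10_refl ht 2
  norm_num [zpow_ofNat] at h h6 h8
  rw [h6, h8] at h
  apply mul_left_cancel₀ ht.ne'
  linear_combination h

lemma rel5 {t : ℝ} (ht : 0 < t) (ht1 : t < 1) :
    -th10 t 4 ^ 4 + th10 t 3 * th10 t 5 ^ 3 + t ^ 3 * th10 t 1 ^ 4 = 0 := by
  have h := three_term ht ht1 5 4 1 0
  have h6 := th10_refl ht 4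
  have h9 := th10_refl ht 1
  norm_num [zpow_ofNat] at h h6 h9
  rw [h6, h9] at h
  apply mul_left_cancel₀ ht.ne'
  linear_combination h

lemma rel6 {t : ℝ} (ht : 0 < t) (ht1 : t < 1) :
    -th10 t 2 * th10 t 3 ^ 2 * th10 t 4 + th10 t 1 * th10 t 4 ^ 2 * th10 t 5 +
      t * th10 t 1 * th10 t 2 ^ 2 * th10 t 3 = 0 := by
  have h := three_term ht ht1 4 3 2 0
  have h6 := th10_refl ht 4
  have h7 := th10_refl ht 3
  norm_num [zpow_ofNat] at h h6 h7
  rw [h6, h7] at h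
  apply mul_left_cancel₀ (pow_ne_zero 2 ht.ne')
  linear_combination h

/-! ### The polynomial identity behind the dissection -/

/-- `comp0`, …, `comp4` are the five components of `key_poly`: `comp i` collects the terms with
`q ^ n`, `n ≡ i` modulo `5`, where `w = q ^ 5`. Each lies in the ideal generated by the three-term
relations. -/
lemma comp0 {b1 b2 b3 b4 b5 w : ℝ}
    (h0 : -b2 ^ 3 * b4 + b1 * b3 ^ 3 + w * b1 ^ 3 * b5 = 0)
    (h1 : -b2 ^ 2 * b3 * b5 + b1 * b3 * b4 ^ 2 + w * b1 ^ 2 * b2 * b4 = 0)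
    (h2 : -b2 ^ 2 * b4 ^ 2 + b1 * b3 * b5 ^ 2 + w * b1 ^ 2 * b3 ^ 2 = 0) :
    3 * b1 ^ 3 * b2 * b3 * b4 ^ 3 * b5 ^ 3 * w - 6 * b1 ^ 4 * b2 * b3 ^ 2 * b4 ^ 3 * b5 * w ^
    2 + b1 * b2 ^ 4 * b3 ^ 3 * b5 ^ 3 * w + 4 * b1 ^ 2 * b2 ^ 2 * b3 ^ 3 * b4 ^ 2 * b5 ^ 2 * w
    + 4 * b1 ^ 5 * b2 ^ 2 * b3 * b4 ^ 2 * b5 * w ^ 3 - b2 ^ 3 * b3 ^ 4 * b4 * b5 ^ 3 + b1 ^ 2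
    * b3 ^ 2 * b4 ^ 4 * b5 ^ 3 - 6 * b1 ^ 3 * b3 ^ 3 * b4 ^ 4 * b5 * w + 2 * b1 ^ 5 * b4 ^ 4 *
    b5 ^ 2 * w ^ 2 = 0 := by
  linear_combination
    (-b2 * b3 * b4 ^ 3 * b5 ^ 2 - 4 * b2 ^ 3 * b3 ^ 2 * b4 * b5 * w + 4 * b1 * b2 * b3 ^ 2 *
    b4 ^ 3 * w - 5 * b1 * b2 ^ 2 * b4 ^ 2 * b5 ^ 2 * w + 2 * b1 ^ 2 * b4 ^ 4 * b5 * w + 4 * b1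
    ^ 2 * b2 ^ 2 * b3 * b4 ^ 2 * w ^ 2) * h0 + (b2 * b3 ^ 3 * b4 * b5 ^ 2 + 2 * b2 ^ 2 * b4 ^
    4 * b5 + 4 * b2 ^ 4 * b3 * b4 ^ 2 * w - b1 * b3 * b4 ^ 2 * b5 ^ 3 - 4 * b1 * b2 * b3 ^ 4 *
    b4 * w - b1 * b2 ^ 2 * b3 ^ 2 * b5 ^ 2 * w - 10 * b1 ^ 2 * b3 ^ 2 * b4 ^ 2 * b5 * w + 5 *
    b1 ^ 2 * b2 * b4 * b5 ^ 3 * w) * h1 + (-b2 ^ 2 * b3 * b4 ^ 2 * b5 ^ 2 + 2 * b1 * b3 * b4 ^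
    4 * b5 + 5 * b1 * b2 ^ 3 * b4 * b5 ^ 2 * w) * h2

lemma comp1 {b1 b2 b3 b4 b5 w : ℝ}
    (h0 : -b2 ^ 3 * b4 + b1 * b3 ^ 3 + w * b1 ^ 3 * b5 = 0)
    (h1 : -b2 ^ 2 * b3 * b5 + b1 * b3 * b4 ^ 2 + w * b1 ^ 2 * b2 * b4 = 0)
    (h2 : -b2 ^ 2 * b4 ^ 2 + b1 * b3 * b5 ^ 2 + w * b1 ^ 2 * b3 ^ 2 = 0) :
    b1 ^ 2 * b2 * b3 * b4 ^ 3 * b5 ^ 4 + b2 ^ 4 * b3 ^ 3 * b5 ^ 4 + 4 * b1 ^ 4 * b2 ^ 2 * b3 *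
    b4 ^ 2 * b5 ^ 2 * w ^ 2 - 4 * b1 ^ 5 * b2 ^ 2 * b3 ^ 2 * b4 ^ 2 * w ^ 3 - 2 * b1 ^ 2 * b3
    ^ 3 * b4 ^ 4 * b5 ^ 2 - b1 ^ 2 * b2 ^ 3 * b3 ^ 2 * b4 * b5 ^ 3 * w + 3 * b1 ^ 4 * b4 ^ 4 *
    b5 ^ 3 * w - 4 * b1 ^ 5 * b3 * b4 ^ 4 * b5 * w ^ 2 - 4 * b1 ^ 3 * b2 * b3 ^ 2 * b4 ^ 3 *
    b5 ^ 2 * w + 4 * b1 ^ 4 * b2 * b3 ^ 3 * b4 ^ 3 * w ^ 2 = 0 := by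
  linear_combination
    (-4 * b2 ^ 2 * b4 ^ 2 * b5 ^ 3 + 3 * b1 * b4 ^ 4 * b5 ^ 2 + 4 * b1 * b2 ^ 2 * b3 * b4 ^ 2
    * b5 * w - 4 * b1 ^ 2 * b3 * b4 ^ 4 * w) * h0 + (-4 * b2 ^ 2 * b3 * b4 ^ 4 - b2 ^ 2 * b3 ^
    2 * b5 ^ 3 - b1 * b3 ^ 2 * b4 ^ 2 * b5 ^ 2 + 4 * b1 * b2 * b4 * b5 ^ 4 + 8 * b1 ^ 2 * b3 ^
    3 * b4 ^ 2 * w - 4 * b1 ^ 3 * b2 * b3 ^ 2 * b4 * w ^ 2) * h1 + (4 * b2 ^ 2 * b3 ^ 2 * b4 ^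
    2 * b5 + 4 * b2 ^ 3 * b4 * b5 ^ 3 - 4 * b1 * b3 ^ 2 * b4 ^ 4 - 3 * b1 * b2 * b4 ^ 3 * b5 ^
    2 - 4 * b1 * b2 ^ 3 * b3 * b4 * b5 * w) * h2

lemma comp2 {b1 b2 b3 b4 b5 w : ℝ}
    (h0 : -b2 ^ 3 * b4 + b1 * b3 ^ 3 + w * b1 ^ 3 * b5 = 0)
    (h1 : -b2 ^ 2 * b3 * b5 + b1 * b3 * b4 ^ 2 + w * b1 ^ 2 * b2 * b4 = 0)
    (h2 : -b2 ^ 2 * b4 ^ 2 + b1 * b3 * b5 ^ 2 + w * b1 ^ 2 * b3 ^ 2 = 0)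
    (h4 : -b3 ^ 2 * b4 ^ 2 + b2 * b4 * b5 ^ 2 + w ^ 2 * b1 ^ 2 * b2 ^ 2 = 0)
    (h5 : -b4 ^ 4 + b3 * b5 ^ 3 + w ^ 3 * b1 ^ 4 = 0) :
    -8 * b1 ^ 4 * b2 ^ 2 * b3 ^ 2 * b4 ^ 2 * b5 * w ^ 2 + b1 ^ 2 * b2 * b3 ^ 2 * b4 ^ 3 * b5 ^
    3 + 12 * b1 ^ 3 * b2 * b3 ^ 3 * b4 ^ 3 * b5 * w - b2 ^ 4 * b3 ^ 4 * b5 ^ 3 + 2 * b1 ^ 5 *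
    b2 * b4 ^ 3 * b5 ^ 2 * w ^ 2 - 8 * b1 ^ 4 * b3 * b4 ^ 4 * b5 ^ 2 * w - b1 * b2 ^ 3 * b3 ^
    2 * b4 * b5 ^ 4 + b1 ^ 3 * b4 ^ 4 * b5 ^ 4 = 0 := by
  linear_combination
    (8 * b2 ^ 2 * b3 * b4 ^ 2 * b5 ^ 2 - 8 * b1 * b3 * b4 ^ 4 * b5 - b1 * b3 ^ 2 * b5 ^ 4 - b1
    ^ 2 * b3 ^ 3 * b5 ^ 2 * w + 2 * b1 ^ 2 * b2 * b4 ^ 3 * b5 * w + b1 ^ 4 * b5 ^ 3 * w ^ 2) *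
    h0 + (b2 ^ 2 * b3 ^ 3 * b5 ^ 2 + 2 * b2 ^ 3 * b4 ^ 3 * b5 + 8 * b1 * b3 ^ 3 * b4 ^ 2 * b5
    - 8 * b1 * b2 * b3 * b4 * b5 ^ 3 - 8 * b1 ^ 2 * b2 * b3 ^ 2 * b4 * b5 * w) * h1 + (-10 *
    b2 ^ 3 * b3 * b4 * b5 ^ 2 + b1 * b3 ^ 4 * b5 ^ 2 + 10 * b1 * b2 * b3 * b4 ^ 3 * b5 + b1 ^
    2 * b5 ^ 5) * h2 + (b1 ^ 2 * b2 * b4 * b5 ^ 3) * h4 + (-b1 ^ 3 * b5 ^ 4) * h5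

lemma comp3 {b1 b2 b3 b4 b5 w : ℝ}
    (h0 : -b2 ^ 3 * b4 + b1 * b3 ^ 3 + w * b1 ^ 3 * b5 = 0)
    (h1 : -b2 ^ 2 * b3 * b5 + b1 * b3 * b4 ^ 2 + w * b1 ^ 2 * b2 * b4 = 0)
    (h2 : -b2 ^ 2 * b4 ^ 2 + b1 * b3 * b5 ^ 2 + w * b1 ^ 2 * b3 ^ 2 = 0) :
    -8 * b1 ^ 3 * b2 ^ 2 * b3 ^ 2 * b4 ^ 2 * b5 ^ 2 * w + 2 * b1 ^ 2 * b2 * b3 ^ 3 * b4 ^ 3 *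
    b5 ^ 2 - b1 ^ 4 * b2 * b4 ^ 3 * b5 ^ 3 * w + 6 * b1 ^ 5 * b2 * b3 * b4 ^ 3 * b5 * w ^ 2 -
    b1 ^ 2 * b2 ^ 4 * b3 ^ 2 * b5 ^ 3 * w - 3 * b1 ^ 3 * b3 * b4 ^ 4 * b5 ^ 3 + b1 * b2 ^ 3 *
    b3 ^ 3 * b4 * b5 ^ 3 + 6 * b1 ^ 4 * b3 ^ 2 * b4 ^ 4 * b5 * w = 0 := by
  linear_combination
    (-6 * b2 ^ 2 * b3 ^ 2 * b4 ^ 2 * b5 + b2 ^ 3 * b4 * b5 ^ 3 + 6 * b1 * b3 ^ 2 * b4 ^ 4 + 2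
    * b1 * b2 * b4 ^ 3 * b5 ^ 2 + 6 * b1 ^ 2 * b2 * b3 * b4 ^ 3 * w) * h0 + (6 * b2 ^ 3 * b3 *
    b4 ^ 3 - 6 * b1 * b3 ^ 4 * b4 ^ 2 - b1 * b2 ^ 2 * b5 ^ 4 - 3 * b1 ^ 2 * b4 ^ 2 * b5 ^ 3) *
    h1 + (-b2 ^ 4 * b5 ^ 3 - 2 * b1 * b2 ^ 2 * b4 ^ 2 * b5 ^ 2) * h2

lemma comp4 {b1 b2 b3 b4 b5 w : ℝ}
    (h0 : -b2 ^ 3 * b4 + b1 * b3 ^ 3 + w * b1 ^ 3 * b5 = 0)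
    (h1 : -b2 ^ 2 * b3 * b5 + b1 * b3 * b4 ^ 2 + w * b1 ^ 2 * b2 * b4 = 0)
    (h2 : -b2 ^ 2 * b4 ^ 2 + b1 * b3 * b5 ^ 2 + w * b1 ^ 2 * b3 ^ 2 = 0) :
    5 * b1 ^ 4 * b2 * b3 * b4 ^ 3 * b5 ^ 2 * w - 4 * b1 ^ 2 * b2 ^ 2 * b3 ^ 2 * b4 ^ 2 * b5 ^
    3 + 4 * b1 ^ 3 * b2 ^ 2 * b3 ^ 3 * b4 ^ 2 * b5 * w - 4 * b1 ^ 5 * b2 * b3 ^ 2 * b4 ^ 3 * w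
    ^ 2 + b1 ^ 2 * b2 ^ 4 * b3 ^ 3 * b5 ^ 2 * w + 5 * b1 ^ 3 * b3 ^ 2 * b4 ^ 4 * b5 ^ 2 - b1 *
    b2 ^ 3 * b3 ^ 4 * b4 * b5 ^ 2 - 4 * b1 ^ 4 * b3 ^ 3 * b4 ^ 4 * w = 0 := by
  linear_combination
    (-b2 ^ 3 * b3 * b4 * b5 ^ 2) * h0 + (b1 * b2 ^ 2 * b3 * b5 ^ 3 + 5 * b1 ^ 2 * b3 * b4 ^ 2
    * b5 ^ 2 - 4 * b1 ^ 3 * b3 ^ 2 * b4 ^ 2 * w) * h1 + (b2 ^ 4 * b3 * b5 ^ 2) * h2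

/-- The components of the dissection satisfy, modulo the three-term relations, the identity that
matches the two expressions for `R(q ^ 2) / R(q) ^ 2`. It splits into five polynomial identities,
one for each residue of the power of `q` modulo `5`. -/
lemma key_poly {b1 b2 b3 b4 b5 q w : ℝ} (hw : q ^ 5 = w)
    (h0 : -b2 ^ 3 * b4 + b1 * b3 ^ 3 + w * b1 ^ 3 * b5 = 0)
    (h1 : -b2 ^ 2 * b3 * b5 + b1 * b3 * b4 ^ 2 + w * b1 ^ 2 * b2 * b4 = 0)
    (h2 : -b2 ^ 2 * b4 ^ 2 + b1 * b3 * b5 ^ 2 + w * b1 ^ 2 * b3 ^ 2 = 0)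
    (h4 : -b3 ^ 2 * b4 ^ 2 + b2 * b4 * b5 ^ 2 + w ^ 2 * b1 ^ 2 * b2 ^ 2 = 0)
    (h5 : -b4 ^ 4 + b3 * b5 ^ 3 + w ^ 3 * b1 ^ 4 = 0) :
    q * b2 * (b3 * b5 ^ 2 - q * b3 ^ 2 * b5 - q ^ 2 * w * b1 ^ 2 * b5 + q ^ 3 * w * b1 ^ 2 * b3 +
      q ^ 4 * b1 * b3 * b5) * (b1 ^ 2 * b4 ^ 3 * (b5 ^ 2 - 4 * w * b1 * b3) +
      (b2 ^ 3 * b3 ^ 2 * b5 ^ 2 + 2 * q * b1 ^ 2 * b3 * b4 ^ 3 * b5 -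
      4 * q ^ 2 * w * b1 ^ 3 * b2 * b3 * b4 ^ 2 - 4 * q ^ 3 * b1 ^ 2 * b2 * b3 * b4 ^ 2 * b5 -
      2 * q ^ 4 * b1 ^ 3 * b4 ^ 3 * b5)) =
    b4 * (b3 ^ 2 * b5 + q * w * b1 ^ 2 * b5 + q ^ 2 * b1 * b5 ^ 2 - q ^ 3 * b1 * b3 * b5 +
      q ^ 4 * b1 * b3 ^ 2) * ((b2 ^ 3 * b3 ^ 2 * b5 ^ 2 + 2 * q * b1 ^ 2 * b3 * b4 ^ 3 * b5 -
      4 * q ^ 2 * w * b1 ^ 3 * b2 * b3 * b4 ^ 2 - 4 * q ^ 3 * b1 ^ 2 * b2 * b3 * b4 ^ 2 * b5 -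
      2 * q ^ 4 * b1 ^ 3 * b4 ^ 3 * b5) - b1 ^ 2 * b4 ^ 3 * (b5 ^ 2 - 4 * w * b1 * b3)) := by
  have c0 := comp0 h0 h1 h2
  have c1 := comp1 h0 h1 h2
  have c2 := comp2 h0 h1 h2 h4 h5
  have c3 := comp3 h0 h1 h2
  have c4 := comp4 h0 h1 h2
  subst hw
  linear_combination c0 + q * c1 + q ^ 2 * c2 + q ^ 3 * c3 + q ^ 4 * c4

/-! ### Lambert series and the five-dissection -/

/-- `Ph(a) θ(a)` does not depend on `a`: by the symmetry of `L`, both `θ(z) L(z, a)` and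
`θ(a) L(a, z)` evaluate the same series. -/
lemma Ph_mul_th {p z a : ℝ} (hp : 0 < p) (hpz : p < z) (hz1 : z < 1) (hpa : p < a) (ha1 : a < 1)
    (h : th p (z * a) ≠ 0) : Ph p a * th p a = Ph p z * th p z := by
  have h1 := th_mul_L hp hpz hz1 (hp.trans hpa) (one_sub_ne hp hpa ha1)
  have h2 := th_mul_L hp hpa ha1 (hp.trans hpz) (one_sub_ne hp hpz hz1)
  rw [← L_symm hp hpz hz1 hpa ha1, mul_comm a z] at h2
  apply mul_left_cancel₀ h
  linear_combination (-th p a) * h1 + th p z * h2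

/-- The constant `θ(a) Ph(a)`, which does not depend on `a`. -/
noncomputable def cst (w : ℝ) : ℝ := Ph (w ^ 10) w * th10 w 1

lemma zpow10 {w : ℝ} (hw : 0 < w) (hw1 : w < 1) (j : ℤ) (h0 : 0 < j) (h1 : j < 10) :
    w ^ 10 < w ^ j ∧ w ^ j < 1 := by
  have h2 : w ^ (10 : ℤ) < w ^ j := zpow_lt_zpow_right_of_lt_one₀ hw hw1 h1
  have h3 : w ^ j < w ^ (0 : ℤ) := zpow_lt_zpow_right_of_lt_one₀ hw hw1 h0
  exact ⟨by exact_mod_cast h2, by simpa using h3⟩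

lemma Ph_step {w : ℝ} (hw : 0 < w) (hw1 : w < 1) (i j : ℤ) (hi : 0 < i) (hi1 : i < 10)
    (hj : 0 < j) (hj1 : j < 10) (h : th10 w (i + j) ≠ 0) :
    Ph (w ^ 10) (w ^ i) * th10 w i = Ph (w ^ 10) (w ^ j) * th10 w j := by
  refine Ph_mul_th (by positivity) (zpow10 hw hw1 j hj hj1).1 (zpow10 hw hw1 j hj hj1).2
    (zpow10 hw hw1 i hi hi1).1 (zpow10 hw hw1 i hi hi1).2 ?_
  rwa [← zpow_add₀ hw.ne', add_comm]

lemma Ph_odd {w : ℝ} (hw : 0 < w) (hw1 : w < 1) :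
    Ph (w ^ 10) (w ^ (1 : ℤ)) * th10 w 1 = cst w ∧ Ph (w ^ 10) (w ^ (3 : ℤ)) * th10 w 3 = cst w ∧
    Ph (w ^ 10) (w ^ (5 : ℤ)) * th10 w 5 = cst w ∧ Ph (w ^ 10) (w ^ (7 : ℤ)) * th10 w 3 = cst w ∧
    Ph (w ^ 10) (w ^ (9 : ℤ)) * th10 w 1 = cst w := by
  have e1 : Ph (w ^ 10) (w ^ (1 : ℤ)) * th10 w 1 = cst w := by simp [cst]
  have e3 := Ph_step hw hw1 3 1 (by norm_num) (by norm_num) (by norm_num) (by norm_num)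
    (th10_pos hw hw1 _ (by norm_num) (by norm_num)).ne'
  have e5 := Ph_step hw hw1 5 1 (by norm_num) (by norm_num) (by norm_num) (by norm_num)
    (th10_pos hw hw1 _ (by norm_num) (by norm_num)).ne'
  have e7 := Ph_step hw hw1 7 1 (by norm_num) (by norm_num) (by norm_num) (by norm_num)
    (th10_pos hw hw1 _ (by norm_num) (by norm_num)).ne'
  have h12 : th10 w (9 + 3) ≠ 0 := by
    rw [show (9 : ℤ) + 3 = 10 + 2 by norm_num, th10_add hw]
    exact div_ne_zero (neg_ne_zero.2 (th10_pos hw hw1 _ (by norm_num) (by norm_num)).ne')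
      (by positivity)
  have e9 := Ph_step hw hw1 9 3 (by norm_num) (by norm_num) (by norm_num) (by norm_num) h12
  have r7 := th10_refl hw 3
  have r9 := th10_refl hw 1
  norm_num at r7 r9
  rw [r7] at e7
  rw [r9] at e9
  exact ⟨e1, e3.trans e1, e5.trans e1, e7.trans e1, e9.trans (e3.trans e1)⟩

lemma L_eq {w : ℝ} (hw : 0 < w) (hw1 : w < 1) (i j : ℤ) (hi : 0 < i) (hi1 : i < 10)
    (hj : 0 < j) (hj1 : j < 10) :
    th10 w j * L (w ^ 10) (w ^ j) (w ^ i) = Ph (w ^ 10) (w ^ i) * th10 w (j + i) := by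
  have := th_mul_L (p := w ^ 10) (by positivity) (zpow10 hw hw1 j hj hj1).1
    (zpow10 hw hw1 j hj hj1).2 (a := w ^ i) (by positivity)
    (one_sub_ne (by positivity) (zpow10 hw hw1 i hi hi1).1 (zpow10 hw hw1 i hi hi1).2)
  rw [← zpow_add₀ hw.ne'] at this
  exact this

/-- The series `L` to the base `q ^ 10`, split along the residues of the summation index
modulo `5`. -/
lemma L_split {q w : ℝ} (hq : 0 < q) (hq1 : q < 1) (hw : q ^ 5 = w) (j : ℤ)
    (hj : 0 < j) (hj1 : j < 10) :
    L (q ^ 10) (q ^ j) w = L (w ^ 10) (w ^ j) (w ^ (1 : ℤ)) +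
      q ^ j * L (w ^ 10) (w ^ j) (w ^ (3 : ℤ)) + (q ^ j) ^ 2 * L (w ^ 10) (w ^ j) (w ^ (5 : ℤ)) +
      (q ^ j) ^ 3 * L (w ^ 10) (w ^ j) (w ^ (7 : ℤ)) +
      (q ^ j) ^ 4 * L (w ^ 10) (w ^ j) (w ^ (9 : ℤ)) := by
  have hw0 : 0 < w := by rw [← hw]; positivity
  have h5 := zpow10 hq hq1 5 (by norm_num) (by norm_num)
  have h5' : q ^ (5 : ℤ) = w := by rw [← hw]; norm_cast
  rw [h5'] at h5
  rw [L_dissect (by positivity) (zpow10 hq hq1 j hj hj1).1 (zpow10 hq hq1 j hj hj1).2 hw0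
    (one_sub_ne (by positivity) h5.1 h5.2)]
  have a1 : (q ^ 10) ^ 5 = w ^ 10 := by rw [← hw]; ring
  have a2 : (q ^ j) ^ 5 = w ^ j := by
    rw [← hw, ← zpow_natCast, ← zpow_natCast, ← zpow_mul, ← zpow_mul, mul_comm]
  have a3 : q ^ 10 = w ^ 2 := by rw [← hw]; ring
  rw [a1, a2, a3]
  simp only [Fin.sum_univ_five, zpow_ofNat]
  norm_num [← pow_mul, ← pow_succ']

/-- The dissection of `θ(q ^ 3) / θ(q ^ 2)`. -/
lemma dissect_A {q w : ℝ} (hq : 0 < q) (hq1 : q < 1) (hw : q ^ 5 = w) :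
    Ph (q ^ 10) w * th10 q 3 * (th10 w 2 * (th10 w 1 * th10 w 3 * th10 w 5)) =
      th10 q 2 * cst w * (th10 w 3 ^ 2 * th10 w 5 + q * w * th10 w 1 ^ 2 * th10 w 5 +
        q ^ 2 * th10 w 1 * th10 w 5 ^ 2 - q ^ 3 * th10 w 1 * th10 w 3 * th10 w 5 +
        q ^ 4 * th10 w 1 * th10 w 3 ^ 2) := by
  have hw0 : 0 < w := by rw [← hw]; positivity
  have hw1 : w < 1 := by rw [← hw]; exact pow_lt_one₀ hq.le hq1 (by norm_num)
  have h := L_eq hq hq1 5 2 (by norm_num) (by norm_num) (by norm_num) (by norm_num)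
  have h5' : q ^ (5 : ℤ) = w := by rw [← hw]; norm_cast
  rw [h5', L_split hq hq1 hw 2 (by norm_num) (by norm_num)] at h
  have l1 := L_eq hw0 hw1 1 2 (by norm_num) (by norm_num) (by norm_num) (by norm_num)
  have l3 := L_eq hw0 hw1 3 2 (by norm_num) (by norm_num) (by norm_num) (by norm_num)
  have l5 := L_eq hw0 hw1 5 2 (by norm_num) (by norm_num) (by norm_num) (by norm_num)
  have l7 := L_eq hw0 hw1 7 2 (by norm_num) (by norm_num) (by norm_num) (by norm_num)
  have l9 := L_eq hw0 hw1 9 2 (by norm_num) (by norm_num) (by norm_num) (by norm_num)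
  obtain ⟨p1, p3, p5, p7, p9⟩ := Ph_odd hw0 hw1
  have r7 := th10_refl hq 3
  have s7 := th10_refl hw0 3
  have s9 := th10_refl hw0 1
  have s11 := th10_add hw0 1
  norm_num at r7 s7 s9 s11 h l1 l3 l5 l7 l9 p1
  rw [r7] at h
  rw [s7] at l5
  rw [s9] at l7
  rw [s11] at l9
  have hb1 := (th10_pos hw0 hw1 1 (by norm_num) (by norm_num)).ne'
  generalize L (w ^ 10) (w ^ 2) w = x1 at *
  generalize L (w ^ 10) (w ^ 2) (w ^ 3) = x3 at *
  generalize L (w ^ 10) (w ^ 2) (w ^ 5) = x5 at *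
  generalize L (w ^ 10) (w ^ 2) (w ^ 7) = x7 at *
  generalize L (w ^ 10) (w ^ 2) (w ^ 9) = x9 at *
  have k1 : th10 w 2 * x1 * th10 w 1 = cst w * th10 w 3 := by
    rw [l1, mul_right_comm]
    exact congrArg (· * th10 w 3) p1
  have k3 : th10 w 2 * x3 * th10 w 3 = cst w * th10 w 5 := by
    rw [l3, mul_right_comm]
    exact congrArg (· * th10 w 5) p3
  have k5 : th10 w 2 * x5 * th10 w 5 = cst w * th10 w 3 := by
    rw [l5, mul_right_comm]
    exact congrArg (· * th10 w 3) p5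
  have k7 : th10 w 2 * x7 * th10 w 3 = cst w * th10 w 1 := by
    rw [l7, mul_right_comm]
    exact congrArg (· * th10 w 1) p7
  have k9 : th10 w 2 * x9 * w = -cst w := by rw [l9, ← p9]; field_simp
  rw [← h]
  clear h l1 l3 l5 l7 l9 p1 p3 p5 p7 p9 r7 s7 s9 s11
  generalize th10 w 1 = b1 at *
  generalize th10 w 2 = b2 at *
  generalize th10 w 3 = b3 at *
  generalize th10 w 5 = b5 at *
  generalize cst w = c at *
  subst hw
  linear_combination th10 q 2 * (b3 * b5 * k1 + q ^ 2 * b1 * b5 * k3 + q ^ 4 * b1 * b3 * k5 +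
    q ^ 6 * b1 * b5 * k7 + q ^ 3 * b1 * b3 * b5 * k9)

/-- The dissection of `θ(q) / θ(q ^ 4)`. -/
lemma dissect_B {q w : ℝ} (hq : 0 < q) (hq1 : q < 1) (hw : q ^ 5 = w) :
    Ph (q ^ 10) w * th10 q 1 * (th10 w 4 * (th10 w 1 * th10 w 3 * th10 w 5)) =
      th10 q 4 * cst w * (th10 w 3 * th10 w 5 ^ 2 - q * th10 w 3 ^ 2 * th10 w 5 -
        q ^ 2 * w * th10 w 1 ^ 2 * th10 w 5 + q ^ 3 * w * th10 w 1 ^ 2 * th10 w 3 +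
        q ^ 4 * th10 w 1 * th10 w 3 * th10 w 5) := by
  have hw0 : 0 < w := by rw [← hw]; positivity
  have hw1 : w < 1 := by rw [← hw]; exact pow_lt_one₀ hq.le hq1 (by norm_num)
  have h := L_eq hq hq1 5 4 (by norm_num) (by norm_num) (by norm_num) (by norm_num)
  have h5' : q ^ (5 : ℤ) = w := by rw [← hw]; norm_cast
  rw [h5', L_split hq hq1 hw 4 (by norm_num) (by norm_num)] at h
  have l1 := L_eq hw0 hw1 1 4 (by norm_num) (by norm_num) (by norm_num) (by norm_num)
  have l3 := L_eq hw0 hw1 3 4 (by norm_num) (by norm_num) (by norm_num) (by norm_num)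
  have l5 := L_eq hw0 hw1 5 4 (by norm_num) (by norm_num) (by norm_num) (by norm_num)
  have l7 := L_eq hw0 hw1 7 4 (by norm_num) (by norm_num) (by norm_num) (by norm_num)
  have l9 := L_eq hw0 hw1 9 4 (by norm_num) (by norm_num) (by norm_num) (by norm_num)
  obtain ⟨p1, p3, p5, p7, p9⟩ := Ph_odd hw0 hw1
  have r9 := th10_refl hq 1
  have s7 := th10_refl hw0 3
  have s9 := th10_refl hw0 1
  have s11 := th10_add hw0 1
  have s13 := th10_add hw0 3
  norm_num at r9 s7 s9 s11 s13 h l1 l3 l5 l7 l9 p1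
  rw [r9] at h
  rw [s7] at l3
  rw [s9] at l5
  rw [s11] at l7
  rw [s13] at l9
  generalize L (w ^ 10) (w ^ 4) w = x1 at *
  generalize L (w ^ 10) (w ^ 4) (w ^ 3) = x3 at *
  generalize L (w ^ 10) (w ^ 4) (w ^ 5) = x5 at *
  generalize L (w ^ 10) (w ^ 4) (w ^ 7) = x7 at *
  generalize L (w ^ 10) (w ^ 4) (w ^ 9) = x9 at *
  have k1 : th10 w 4 * x1 * th10 w 1 = cst w * th10 w 5 := by
    rw [l1, mul_right_comm]
    exact congrArg (· * th10 w 5) p1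
  have k3 : th10 w 4 * x3 * th10 w 3 = cst w * th10 w 3 := by
    rw [l3, mul_right_comm]
    exact congrArg (· * th10 w 3) p3
  have k5 : th10 w 4 * x5 * th10 w 5 = cst w * th10 w 1 := by
    rw [l5, mul_right_comm]
    exact congrArg (· * th10 w 1) p5
  have k7 : th10 w 4 * x7 * th10 w 3 * w = -cst w * th10 w 1 := by rw [l7, ← p7]; field_simp
  have k9 : th10 w 4 * x9 * th10 w 1 * w ^ 3 = -cst w * th10 w 3 := by rw [l9, ← p9]; field_simp
  rw [← h]
  clear h l1 l3 l5 l7 l9 p1 p3 p5 p7 p9 r9 s7 s9 s11 s13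
  generalize th10 w 1 = b1 at *
  generalize th10 w 4 = b4 at *
  generalize th10 w 3 = b3 at *
  generalize th10 w 5 = b5 at *
  generalize cst w = c at *
  subst hw
  linear_combination th10 q 4 * (b3 * b5 * k1 + q ^ 4 * b1 * b5 * k3 + q ^ 8 * b1 * b3 * k5 +
    q ^ 7 * b1 * b5 * k7 + q * b3 * b5 * k9)

/-- Positivity of the common factor `Ph(w)` of the two dissections; it is read off from
`θ(q ^ 2) L(q ^ 2, q ^ 5) = Ph(q ^ 5) θ(q ^ 7)`. -/
lemma Ph_pos {q : ℝ} (hq : 0 < q) (hq1 : q < 1) : 0 < Ph (q ^ 10) (q ^ 5) := by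
  have h := L_eq hq hq1 5 2 (by norm_num) (by norm_num) (by norm_num) (by norm_num)
  have hL : 0 < L (q ^ 10) (q ^ 2) (q ^ 5) := by
    refine L_pos (by positivity) ?_ (pow_lt_one₀ hq.le hq1 (by norm_num)) (by rw [← pow_mul])
      (pow_lt_one₀ hq.le hq1 (by norm_num)) (by positivity) (by positivity) ?_
    · rw [← pow_mul]
      exact pow_le_pow_of_le_one hq.le hq1.le (by norm_num)
    · rw [← pow_add]
      exact pow_lt_pow_right_of_lt_one₀ hq hq1 (by norm_num)
  have h2 := th10_pos hq hq1 2 (by norm_num) (by norm_num)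
  have h7 := th10_pos hq hq1 7 (by norm_num) (by norm_num)
  norm_num [zpow_ofNat] at h
  exact pos_of_mul_pos_left (h ▸ mul_pos h2 hL) h7.le

/-- The numerator of the dissection of `R(q ^ 2) / R(q) ^ 2`, with `b j = θ(w ^ j)`. -/
noncomputable def Nm (b : ℤ → ℝ) (q w : ℝ) : ℝ :=
  b 2 ^ 3 * b 3 ^ 2 * b 5 ^ 2 + 2 * q * b 1 ^ 2 * b 3 * b 4 ^ 3 * b 5 -
    4 * q ^ 2 * w * b 1 ^ 3 * b 2 * b 3 * b 4 ^ 2 - 4 * q ^ 3 * b 1 ^ 2 * b 2 * b 3 * b 4 ^ 2 * b 5 -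
    2 * q ^ 4 * b 1 ^ 3 * b 4 ^ 3 * b 5

/-- The denominator of the dissection of `R(q ^ 2) / R(q) ^ 2`, a series in `w`. -/
noncomputable def Dn (b : ℤ → ℝ) (w : ℝ) : ℝ :=
  b 1 ^ 2 * b 4 ^ 3 * (b 5 ^ 2 - 4 * w * b 1 * b 3)

/-- `R(q ^ 2) / R(q) ^ 2 = N / D`, in terms of theta functions. -/
lemma dissection {q w : ℝ} (hq : 0 < q) (hq1 : q < 1) (hw : q ^ 5 = w) :
    th10 q 2 ^ 3 * th10 q 3 ^ 2 * Dn (th10 w) w =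
      th10 q 4 ^ 3 * th10 q 1 ^ 2 * Nm (th10 w) q w := by
  have hw0 : 0 < w := by rw [← hw]; positivity
  have hw1 : w < 1 := by rw [← hw]; exact pow_lt_one₀ hq.le hq1 (by norm_num)
  have hA := dissect_A hq hq1 hw
  have hB := dissect_B hq hq1 hw
  have key := key_poly hw (rel0 hw0 hw1) (rel1 hw0 hw1) (rel2 hw0 hw1) (rel4 hw0 hw1)
    (rel5 hw0 hw1)
  have r1 := rel1 hq hq1
  have r6 := rel6 hq hq1
  have hP : Ph (q ^ 10) w ≠ 0 := by rw [← hw]; exact (Ph_pos hq hq1).ne'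
  have b1 := (th10_pos hw0 hw1 1 (by norm_num) (by norm_num)).ne'
  have b2 := (th10_pos hw0 hw1 2 (by norm_num) (by norm_num)).ne'
  have b3 := (th10_pos hw0 hw1 3 (by norm_num) (by norm_num)).ne'
  have b4 := (th10_pos hw0 hw1 4 (by norm_num) (by norm_num)).ne'
  have b5 := (th10_pos hw0 hw1 5 (by norm_num) (by norm_num)).ne'
  have j1 := (th10_pos hq hq1 1 (by norm_num) (by norm_num)).ne'
  have j2 := (th10_pos hq hq1 2 (by norm_num) (by norm_num)).ne'
  have j3 := (th10_pos hq hq1 3 (by norm_num) (by norm_num)).ne'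
  have j4 := (th10_pos hq hq1 4 (by norm_num) (by norm_num)).ne'
  have j5 := (th10_pos hq hq1 5 (by norm_num) (by norm_num)).ne'
  have hN : Nm (th10 w) q w = Nm (th10 w) q w := rfl
  have hD : Dn (th10 w) w = Dn (th10 w) w := rfl
  nth_rw 2 [Nm] at hN
  nth_rw 2 [Dn] at hD
  rw [← hN, ← hD] at key
  clear hN hD
  generalize Nm (th10 w) q w = N at *
  generalize Dn (th10 w) w = D at *
  -- the ratio of the two dissections
  have e : th10 q 3 * th10 q 4 * (N - D) = q * th10 q 1 * th10 q 2 * (N + D) := by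
    have hne : Ph (q ^ 10) w * (th10 w 2 * th10 w 4 * (th10 w 1 * th10 w 3 * th10 w 5)) ≠ 0 := by
      positivity
    apply mul_left_cancel₀ hne
    linear_combination (th10 w 4 * th10 q 4 * (N - D)) * hA -
      q * th10 w 2 * th10 q 2 * (N + D) * hB - th10 q 2 * th10 q 4 * cst w * key
  apply mul_left_cancel₀ j5
  linear_combination -th10 q 2 * th10 q 3 * D * r1 - th10 q 1 * th10 q 4 * N * r6 -
    th10 q 1 * th10 q 2 * th10 q 3 * th10 q 4 * e

/-! ### The five-dissection of a squared theta function -/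

/-- The Gaussian integers as the disjoint union of the multiples of `2 + i` and of the four classes
`u * (1 + (2 + i) * (a + b * i))`, with `u` a unit. -/
def gauss (x : Fin 5 × ℤ × ℤ) : ℤ × ℤ :=
  ![(2 * x.2.1 - x.2.2, x.2.1 + 2 * x.2.2),
    (1 + 2 * x.2.1 - x.2.2, x.2.1 + 2 * x.2.2),
    (-(x.2.1 + 2 * x.2.2), 1 + 2 * x.2.1 - x.2.2),
    (-(1 + 2 * x.2.1 - x.2.2), -(x.2.1 + 2 * x.2.2)),
    (x.2.1 + 2 * x.2.2, -(1 + 2 * x.2.1 - x.2.2))] x.1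

lemma gauss_bijective : Function.Bijective gauss := by
  constructor
  · rintro ⟨i, a, b⟩ ⟨j, c, d⟩ h
    fin_cases i <;> fin_cases j <;> simp [gauss] at h ⊢ <;> omega
  · rintro ⟨x, y⟩
    have h : (x - 2 * y) % 5 = 0 ∨ (x - 2 * y) % 5 = 1 ∨ (x - 2 * y) % 5 = 3 ∨
        (x - 2 * y) % 5 = 4 ∨ (x - 2 * y) % 5 = 2 := by omega
    rcases h with h | h | h | h | h
    · refine ⟨(0, (2 * x + y) / 5, (2 * y - x) / 5), ?_⟩
      simp [gauss]; omega
    · refine ⟨(1, (2 * (x - 1) + y) / 5, (2 * y - (x - 1)) / 5), ?_⟩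
      simp [gauss]; omega
    · refine ⟨(2, (2 * (y - 1) - x) / 5, (-2 * x - (y - 1)) / 5), ?_⟩
      simp [gauss]; omega
    · refine ⟨(3, (2 * (-x - 1) - y) / 5, (-2 * y - (-x - 1)) / 5), ?_⟩
      simp [gauss]; omega
    · refine ⟨(4, (2 * (-y - 1) + x) / 5, (2 * x - (-y - 1)) / 5), ?_⟩
      simp [gauss]; omega

/-- The summand of `∑ (-1) ^ n w ^ n ^ 2`. -/
lemma phi_term {w : ℝ} (hw : 0 < w) (n : ℤ) :
    (w ^ 2) ^ tri n * (-w) ^ n = (-1) ^ n * w ^ (n ^ 2) := by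
  rw [neg_eq_neg_one_mul, mul_zpow, ← zpow_natCast w 2, ← zpow_mul, mul_left_comm,
    ← zpow_add₀ hw.ne']
  congr 2
  have := two_mul_tri n
  push_cast
  linear_combination this

lemma th10_term {w : ℝ} (hw : 0 < w) (j n : ℤ) :
    (w ^ 10) ^ tri n * (-(w ^ j)) ^ n = (-1) ^ n * w ^ (5 * n ^ 2 - 5 * n + j * n) := by
  rw [neg_eq_neg_one_mul, mul_zpow, ← zpow_natCast w 10, ← zpow_mul, mul_left_comm,
    ← zpow_mul, ← zpow_add₀ hw.ne']
  congr 2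
  have := two_mul_tri n
  push_cast
  linear_combination 5 * this

lemma neg_one_zpow_congr {m n : ℤ} (h : Even (m - n)) : (-1 : ℝ) ^ m = (-1) ^ n := by
  rw [show m = (m - n) + n by ring, zpow_add₀ (by norm_num), h.neg_one_zpow, one_mul]

lemma mul_term {w : ℝ} (hw : 0 < w) (a b x y : ℤ) :
    (-1 : ℝ) ^ a * w ^ x * ((-1) ^ b * w ^ y) = (-1) ^ (a + b) * w ^ (x + y) := by
  rw [zpow_add₀ hw.ne', zpow_add₀ (by norm_num)]
  ring

lemma gauss_zero (x : ℤ × ℤ) :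
    (gauss (0, x)).1 + (gauss (0, x)).2 = x.1 + x.2 + (x.1 + x.1) ∧
      (gauss (0, x)).1 ^ 2 + (gauss (0, x)).2 ^ 2 = 5 * x.1 ^ 2 + 5 * x.2 ^ 2 := by
  simp only [gauss, Matrix.cons_val]
  constructor <;> ring

lemma gauss_unit (x : ℤ × ℤ) {k : Fin 5} (hk : k ≠ 0) :
    Even ((gauss (k, x)).1 + (gauss (k, x)).2 - (1 + (x.1 + x.2))) ∧
      (gauss (k, x)).1 ^ 2 + (gauss (k, x)).2 ^ 2 =
        1 + (5 * x.1 ^ 2 + 4 * x.1 + (5 * x.2 ^ 2 - 2 * x.2)) := by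
  obtain ⟨a, b⟩ := x
  fin_cases k
  · exact absurd rfl hk
  · simp only [gauss, Fin.mk_one, Matrix.cons_val]
    exact ⟨⟨a, by ring⟩, by ring⟩
  · simp only [gauss, Fin.reduceFinMk, Matrix.cons_val]
    exact ⟨⟨-2 * b, by ring⟩, by ring⟩
  · simp only [gauss, Fin.reduceFinMk, Matrix.cons_val]
    exact ⟨⟨-1 - 2 * a - b, by ring⟩, by ring⟩
  · simp only [gauss, Fin.reduceFinMk, Matrix.cons_val]
    exact ⟨⟨-1 - a + b, by ring⟩, by ring⟩

lemma summable_prod {f g : ℤ → ℝ} (hf : Summable f) (hg : Summable g) :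
    Summable fun x : ℤ × ℤ => f x.1 * g x.2 :=
  summable_mul_of_summable_norm hf.norm hg.norm

lemma tsum_prod_mul {f g : ℤ → ℝ} (hf : Summable f) (hg : Summable g) :
    ∑' x : ℤ × ℤ, f x.1 * g x.2 = (∑' n, f n) * ∑' n, g n :=
  (tsum_mul_tsum_of_summable_norm hf.norm hg.norm).symm

/-- The five-dissection of `φ(-w) ^ 2`. -/
lemma phi_sq {w : ℝ} (hw : 0 < w) (hw1 : w < 1) :
    th (w ^ 2) w ^ 2 = th10 w 5 ^ 2 - 4 * w * th10 w 1 * th10 w 3 := by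
  have hw2 : w ^ 2 < 1 := pow_lt_one₀ hw.le hw1 (by norm_num)
  have hw10 : w ^ 10 < 1 := pow_lt_one₀ hw.le hw1 (by norm_num)
  obtain ⟨F, hF⟩ : ∃ F : ℤ → ℤ → ℝ, ∀ j n, F j n = (-1) ^ n * w ^ (5 * n ^ 2 - 5 * n + j * n) :=
    ⟨_, fun _ _ => rfl⟩
  obtain ⟨G, hG⟩ : ∃ G : ℤ → ℝ, ∀ n, G n = (-1) ^ n * w ^ (n ^ 2) := ⟨_, fun _ => rfl⟩
  have s0 : ∀ j, Summable (F j) := fun j =>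
    (hasSum_th (by positivity) hw10 (zpow_pos hw j).ne').summable.congr fun n => by
      rw [th10_term hw, hF]
  have t0 : ∀ j, th10 w j = ∑' n, F j n := fun j => by
    rw [th10, ← (hasSum_th (by positivity) hw10 (zpow_pos hw j).ne').tsum_eq]
    exact tsum_congr fun n => by rw [th10_term hw, hF]
  have s1 : Summable G :=
    (hasSum_th (by positivity) hw2 hw.ne').summable.congr fun n => by rw [phi_term hw, hG]
  have t1 : th (w ^ 2) w = ∑' n, G n := by
    rw [← (hasSum_th (by positivity) hw2 hw.ne').tsum_eq]
    exact tsum_congr fun n => by rw [phi_term hw, hG]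
  have main := tsum_split gauss gauss_bijective (summable_prod s1 s1)
  rw [tsum_prod_mul s1 s1, ← t1, Fin.sum_univ_five] at main
  have c0 : ∑' x : ℤ × ℤ, G (gauss (0, x)).1 * G (gauss (0, x)).2 = th10 w 5 ^ 2 := by
    rw [sq (th10 w 5), t0, ← tsum_prod_mul (s0 5) (s0 5)]
    refine tsum_congr fun x => ?_
    obtain ⟨h1, h2⟩ := gauss_zero x
    rw [hG, hG, hF, hF, mul_term hw, mul_term hw, h1, h2,
      neg_one_zpow_congr (n := x.1 + x.2) ⟨x.1, by ring⟩]
    congr 2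
    ring
  have ck : ∀ k : Fin 5, k ≠ 0 → ∑' x : ℤ × ℤ, G (gauss (k, x)).1 * G (gauss (k, x)).2 =
      -w * (th10 w 1 * th10 w 3) := by
    intro k hk
    have hu : -w = (-1 : ℝ) ^ (1 : ℤ) * w ^ (1 : ℤ) := by simp
    have sn : Summable fun c : ℤ => F 1 (-c) := (Equiv.neg ℤ).summable_iff.2 (s0 1)
    have tn : th10 w 1 = ∑' c : ℤ, F 1 (-c) := (t0 1).trans ((Equiv.neg ℤ).tsum_eq (F 1)).symm
    rw [tn, t0 3, ← tsum_prod_mul sn (s0 3), ← tsum_mul_left]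
    refine tsum_congr fun x => ?_
    obtain ⟨h1, h2⟩ := gauss_unit x hk
    rw [hG, hG, hF, hF, hu, mul_term hw, mul_term hw, mul_term hw, h2,
      neg_one_zpow_congr (n := 1 + (-x.1 + x.2))]
    · congr 2
      ring
    · obtain ⟨c, hc⟩ := h1
      exact ⟨c + x.1, by linear_combination hc⟩
  rw [c0, ck 1 (by decide), ck 2 (by decide), ck 3 (by decide), ck 4 (by decide)] at main
  linear_combination main

/-! ### The dissection as infinite products -/

lemma tendsto_Q {p : ℝ} (hp : 0 < p) (hp1 : p < 1) (a : ℝ) :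
    Filter.Tendsto (fun n => ∏ k ∈ Finset.range n, (1 - a * p ^ k)) Filter.atTop
      (nhds (Q a p)) :=
  (multipliable_Q hp hp1 a).hasProd.tendsto_prod_nat

lemma Q_split_five {p : ℝ} (hp : 0 < p) (hp1 : p < 1) (a : ℝ) :
    Q a p = Q a (p ^ 5) * Q (a * p) (p ^ 5) * Q (a * p ^ 2) (p ^ 5) * Q (a * p ^ 3) (p ^ 5) *
      Q (a * p ^ 4) (p ^ 5) := by
  have hp5 : 0 < p ^ 5 := by positivity
  have hp51 : p ^ 5 < 1 := pow_lt_one₀ hp.le hp1 (by norm_num)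
  have h1 := (tendsto_Q hp hp1 a).comp
    (Filter.tendsto_id.const_mul_atTop' (r := 5) (by norm_num))
  have h2 := ((((tendsto_Q hp5 hp51 a).mul (tendsto_Q hp5 hp51 (a * p))).mul
    (tendsto_Q hp5 hp51 (a * p ^ 2))).mul (tendsto_Q hp5 hp51 (a * p ^ 3))).mul
    (tendsto_Q hp5 hp51 (a * p ^ 4))
  refine tendsto_nhds_unique h1 (h2.congr fun n => ?_)
  simp only [Function.comp_apply, id_eq]
  induction n with
  | zero => simp
  | succ n ih =>
    rw [show 5 * (n + 1) = 5 * n + 1 + 1 + 1 + 1 + 1 by ring]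
    simp only [Finset.prod_range_succ, ← ih]
    ring

lemma Q_sq {p : ℝ} (hp : 0 < p) (hp1 : p < 1) (a : ℝ) :
    Q (a ^ 2) (p ^ 2) = Q a p * Q (-a) p := by
  unfold Q
  rw [← (multipliable_Q hp hp1 a).tprod_mul (multipliable_Q hp hp1 (-a))]
  refine tprod_congr fun k => ?_
  ring

/-- `P w j` is the product of `1 - w ^ n` over the positive `n` congruent to `j` or `-j`
modulo `10`, for `0 < j < 10`; when `j = 5` each factor occurs twice. -/
noncomputable def P (w : ℝ) (j : ℕ) : ℝ := Q (w ^ j) (w ^ 10) * Q (w ^ (10 - j)) (w ^ 10)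

lemma Q_pow_pos {w : ℝ} (hw : 0 < w) (hw1 : w < 1) {a m : ℕ} (ha : a ≠ 0) (hm : m ≠ 0) :
    0 < Q (w ^ a) (w ^ m) :=
  Q_pos (by positivity) (pow_lt_one₀ hw.le hw1 hm) (pow_lt_one₀ hw.le hw1 ha)

lemma P_pos {w : ℝ} (hw : 0 < w) (hw1 : w < 1) {j : ℕ} (h0 : 0 < j) (h1 : j < 10) : 0 < P w j :=
  mul_pos (Q_pow_pos hw hw1 (by omega) (by norm_num)) (Q_pow_pos hw hw1 (by omega) (by norm_num))

lemma th10_eq {w : ℝ} (hw : 0 < w) (hw1 : w < 1) {j : ℕ} (h0 : 0 < j) (h1 : j < 10) :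
    th10 w j = Q (w ^ 10) (w ^ 10) * P w j := by
  have h := jtp (p := w ^ 10) (z := w ^ j) (by positivity)
    (pow_lt_pow_right_of_lt_one₀ hw hw1 h1) (pow_lt_one₀ hw.le hw1 h0.ne')
  rw [th10, zpow_natCast, h, P, mul_assoc, pow_sub₀ _ hw.ne' h1.le, div_eq_mul_inv]

lemma phi_eq {w : ℝ} (hw : 0 < w) (hw1 : w < 1) :
    th (w ^ 2) w = Q (w ^ 10) (w ^ 10) * P w 2 * P w 4 * (P w 1 * P w 3 * Q (w ^ 5) (w ^ 10)) ^ 2 := by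
  have hw2 : w ^ 2 < 1 := pow_lt_one₀ hw.le hw1 (by norm_num)
  have h := jtp (p := w ^ 2) (z := w) (by positivity) (by nlinarith) hw1
  have e1 := Q_split_five (by positivity) hw2 (w ^ 2)
  have e2 := Q_split_five (by positivity) hw2 w
  have hd : w ^ 2 / w = w := by field_simp
  rw [h, hd, e1, e2]
  simp only [P]
  norm_num only [← pow_mul, ← pow_add, ← pow_succ']
  ring_nf

/-- The identity `1 - w ^ (2 n) = (1 - w ^ n) (1 + w ^ n)`, multiplied over `n ≡ 1, 4` modulo `5`.
It removes the negative coefficients that the factor `P w 2` would contribute. -/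
lemma P_two {w : ℝ} (hw : 0 < w) (hw1 : w < 1) :
    P w 2 = P w 1 * P w 4 * (Q (-w) (w ^ 5) * Q (-w ^ 4) (w ^ 5)) := by
  have hw5 : w ^ 5 < 1 := pow_lt_one₀ hw.le hw1 (by norm_num)
  have h1 := Q_sq (by positivity) hw5 w
  have h2 := Q_sq (by positivity) hw5 (w ^ 4)
  rw [Q_split (by positivity) hw5 w] at h1
  rw [Q_split (by positivity) hw5 (w ^ 4)] at h2
  norm_num only [← pow_mul, ← pow_add, ← pow_succ'] at h1 h2
  simp only [P]
  norm_num only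
  rw [h1, h2, pow_one]
  ring

/-- The function `R(q)` for real `q`. -/
noncomputable def rr (q : ℝ) : ℝ :=
  (Q q (q ^ 5) * Q (q ^ 4) (q ^ 5)) / (Q (q ^ 2) (q ^ 5) * Q (q ^ 3) (q ^ 5))

lemma rr_eq {q : ℝ} (hq : 0 < q) (hq1 : q < 1) : rr q = P q 1 * P q 4 / (P q 2 * P q 3) := by
  have hq5 : q ^ 5 < 1 := pow_lt_one₀ hq.le hq1 (by norm_num)
  have h1 := Q_split (by positivity) hq5 q
  have h2 := Q_split (by positivity) hq5 (q ^ 2)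
  have h3 := Q_split (by positivity) hq5 (q ^ 3)
  have h4 := Q_split (by positivity) hq5 (q ^ 4)
  rw [rr, h1, h2, h3, h4]
  simp only [P]
  norm_num only [← pow_mul, ← pow_add, ← pow_succ']
  rw [pow_one]
  ring

lemma rr_sq_eq (q : ℝ) : rr (q ^ 2) = P q 2 / P q 4 := by
  simp only [P, rr]
  norm_num only [← pow_mul]

/-- The coefficients of the five-dissection are infinite products. -/
lemma rr_dissection {q w : ℝ} (hq : 0 < q) (hq1 : q < 1) (hw : q ^ 5 = w) :
    rr (q ^ 2) / rr q ^ 2 =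
      P w 2 * (P w 1 ^ 6 * P w 3 ^ 2 * P w 4 ^ 5)⁻¹ +
      2 * q * (P w 1 ^ 4 * P w 2 ^ 2 * P w 3 ^ 3 * P w 4 ^ 2 * Q (w ^ 5) (w ^ 10) ^ 2)⁻¹ -
      4 * q ^ 2 * w * (P w 1 ^ 3 * P w 2 * P w 3 ^ 3 * P w 4 ^ 3 * Q (w ^ 5) (w ^ 10) ^ 4)⁻¹ -
      4 * q ^ 3 * (P w 1 ^ 4 * P w 2 * P w 3 ^ 3 * P w 4 ^ 3 * Q (w ^ 5) (w ^ 10) ^ 2)⁻¹ -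
      2 * q ^ 4 * (P w 1 ^ 3 * P w 2 ^ 2 * P w 3 ^ 4 * P w 4 ^ 2 * Q (w ^ 5) (w ^ 10) ^ 2)⁻¹ := by
  have hw0 : 0 < w := by rw [← hw]; positivity
  have hw1 : w < 1 := by rw [← hw]; exact pow_lt_one₀ hq.le hq1 (by norm_num)
  have h := dissection hq hq1 hw
  have hphi := phi_sq hw0 hw1
  rw [phi_eq hw0 hw1] at hphi
  have tq : ∀ j : ℕ, 0 < j → j < 10 → th10 q j = _ := fun j => th10_eq hq hq1
  have tw : ∀ j : ℕ, 0 < j → j < 10 → th10 w j = _ := fun j => th10_eq hw0 hw1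
  have q1 := tq 1 (by norm_num) (by norm_num)
  have q2 := tq 2 (by norm_num) (by norm_num)
  have q3 := tq 3 (by norm_num) (by norm_num)
  have q4 := tq 4 (by norm_num) (by norm_num)
  have w1 := tw 1 (by norm_num) (by norm_num)
  have w2 := tw 2 (by norm_num) (by norm_num)
  have w3 := tw 3 (by norm_num) (by norm_num)
  have w4 := tw 4 (by norm_num) (by norm_num)
  have w5 := tw 5 (by norm_num) (by norm_num)
  have hP5 : P w 5 = Q (w ^ 5) (w ^ 10) ^ 2 := (sq _).symm
  rw [hP5] at w5
  push_cast at q1 q2 q3 q4 w1 w2 w3 w4 w5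
  rw [Dn, ← hphi, Nm, q1, q2, q3, q4, w1, w2, w3, w4, w5] at h
  rw [rr_eq hq hq1, rr_sq_eq]
  have a1 := (P_pos hq hq1 (j := 1) (by norm_num) (by norm_num)).ne'
  have a2 := (P_pos hq hq1 (j := 2) (by norm_num) (by norm_num)).ne'
  have a3 := (P_pos hq hq1 (j := 3) (by norm_num) (by norm_num)).ne'
  have a4 := (P_pos hq hq1 (j := 4) (by norm_num) (by norm_num)).ne'
  have b1 := (P_pos hw0 hw1 (j := 1) (by norm_num) (by norm_num)).ne'
  have b2 := (P_pos hw0 hw1 (j := 2) (by norm_num) (by norm_num)).ne'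
  have b3 := (P_pos hw0 hw1 (j := 3) (by norm_num) (by norm_num)).ne'
  have b4 := (P_pos hw0 hw1 (j := 4) (by norm_num) (by norm_num)).ne'
  have b5 := (Q_pow_pos hw0 hw1 (a := 5) (m := 10) (by norm_num) (by norm_num)).ne'
  have c1 := (Q_pow_pos hq hq1 (a := 10) (m := 10) (by norm_num) (by norm_num)).ne'
  have c2 := (Q_pow_pos hw0 hw1 (a := 10) (m := 10) (by norm_num) (by norm_num)).ne'
  clear q1 q2 q3 q4 w1 w2 w3 w4 w5 tq tw hphi hP5 hw
  generalize P q 1 = x1 at *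
  generalize P q 2 = x2 at *
  generalize P q 3 = x3 at *
  generalize P q 4 = x4 at *
  generalize P w 1 = y1 at *
  generalize P w 2 = y2 at *
  generalize P w 3 = y3 at *
  generalize P w 4 = y4 at *
  generalize Q (w ^ 5) (w ^ 10) = y5 at *
  generalize Q (q ^ 10) (q ^ 10) = z1 at *
  generalize Q (w ^ 10) (w ^ 10) = z2 at *
  field_simp at h ⊢
  linear_combination h

/-! ### Power series with positive coefficients -/

/-- On `(0, 1)`, `f` is the sum of the power series with coefficients `c`, and these are
nonnegative. -/
def Ser (c : ℕ → ℝ) (f : ℝ → ℝ) : Prop :=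
  (∀ n, 0 ≤ c n) ∧ ∀ x, 0 < x → x < 1 → HasSum (fun n => c n * x ^ n) (f x)

/-- `f` has a power series on `(0, 1)` with nonnegative coefficients. -/
def Nonneg (f : ℝ → ℝ) : Prop := ∃ c, Ser c f

/-- `f` has a power series on `(0, 1)` with nonnegative coefficients and positive constant
coefficient. -/
def Pos0 (f : ℝ → ℝ) : Prop := ∃ c, Ser c f ∧ 0 < c 0

/-- `f` has a power series on `(0, 1)` with positive coefficients. -/
def AllPos (f : ℝ → ℝ) : Prop := ∃ c, Ser c f ∧ ∀ n, 0 < c n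

lemma Pos0.nonneg {f : ℝ → ℝ} (h : Pos0 f) : Nonneg f := h.imp fun _ h => h.1

lemma Ser.congr {c : ℕ → ℝ} {f g : ℝ → ℝ} (h : Ser c f) (hfg : ∀ x, 0 < x → x < 1 → f x = g x) :
    Ser c g :=
  ⟨h.1, fun x h0 h1 => hfg x h0 h1 ▸ h.2 x h0 h1⟩

lemma Pos0.congr {f g : ℝ → ℝ} (h : Pos0 f) (hfg : ∀ x, 0 < x → x < 1 → f x = g x) : Pos0 g :=
  h.imp fun _ h => ⟨h.1.congr hfg, h.2⟩

lemma AllPos.congr {f g : ℝ → ℝ} (h : AllPos f) (hfg : ∀ x, 0 < x → x < 1 → f x = g x) :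
    AllPos g :=
  h.imp fun _ h => ⟨h.1.congr hfg, h.2⟩

lemma Ser.mul {c d : ℕ → ℝ} {f g : ℝ → ℝ} (hf : Ser c f) (hg : Ser d g) :
    Ser (fun n => ∑ k ∈ Finset.range (n + 1), c k * d (n - k)) fun x => f x * g x := by
  refine ⟨fun n => Finset.sum_nonneg fun k _ => mul_nonneg (hf.1 k) (hg.1 _), fun x h0 h1 => ?_⟩
  have hF := hf.2 x h0 h1
  have hG := hg.2 x h0 h1
  have h := hasSum_sum_range_mul_of_summable_norm hF.summable.norm hG.summable.norm
  rw [hF.tsum_eq, hG.tsum_eq] at h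
  refine h.congr_fun fun n => ?_
  rw [Finset.sum_mul]
  refine Finset.sum_congr rfl fun k hk => ?_
  have hkn : k ≤ n := Nat.lt_succ_iff.1 (Finset.mem_range.1 hk)
  rw [mul_mul_mul_comm, ← pow_add, Nat.add_sub_cancel' hkn]

lemma Nonneg.mul {f g : ℝ → ℝ} (hf : Nonneg f) (hg : Nonneg g) : Nonneg fun x => f x * g x := by
  obtain ⟨c, hc⟩ := hf
  obtain ⟨d, hd⟩ := hg
  exact ⟨_, hc.mul hd⟩

lemma Pos0.mul {f g : ℝ → ℝ} (hf : Pos0 f) (hg : Pos0 g) : Pos0 fun x => f x * g x := by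
  obtain ⟨c, hc, hc0⟩ := hf
  obtain ⟨d, hd, hd0⟩ := hg
  exact ⟨_, hc.mul hd, by simpa using mul_pos hc0 hd0⟩

lemma ser_monomial (m : ℕ) : Ser (fun n => if n = m then 1 else 0) fun x => x ^ m := by
  refine ⟨fun n => by positivity, fun x _ _ => ?_⟩
  have h := hasSum_ite_eq m (x ^ m)
  convert h using 2 with n
  split_ifs with hn <;> simp [hn]

lemma nonneg_monomial (m : ℕ) : Nonneg fun x => x ^ m := ⟨_, ser_monomial m⟩

lemma pos0_one : Pos0 fun _ => 1 :=
  ⟨_, (ser_monomial 0).congr fun x _ _ => pow_zero x, by simp⟩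

lemma Pos0.pow {f : ℝ → ℝ} (hf : Pos0 f) (m : ℕ) : Pos0 fun x => f x ^ m := by
  induction m with
  | zero => simpa using pos0_one
  | succ m ih => simpa only [pow_succ] using ih.mul hf

lemma pos0_prod {f : ℕ → ℝ → ℝ} (hf : ∀ n, Pos0 (f n)) (m : ℕ) :
    Pos0 fun x => ∏ k ∈ Finset.range m, f k x := by
  induction m with
  | zero => simpa using pos0_one
  | succ m ih => simpa only [Finset.prod_range_succ] using ih.mul (hf m)

/-- The geometric series. -/
lemma pos0_geom {m : ℕ} (hm : m ≠ 0) : Pos0 fun x => (1 - x ^ m)⁻¹ := by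
  refine ⟨fun n => if m ∣ n then 1 else 0, ⟨fun n => by positivity, fun x h0 h1 => ?_⟩, by simp⟩
  have h := hasSum_geometric_of_lt_one (pow_nonneg h0.le m) (pow_lt_one₀ h0.le h1 hm)
  have hi : Function.Injective fun n : ℕ => m * n := fun a b hab =>
    Nat.eq_of_mul_eq_mul_left (Nat.pos_of_ne_zero hm) hab
  rw [← hi.hasSum_iff (fun n hn => ?_)]
  · convert h using 2 with n
    simp [pow_mul]
  · have hd : ¬ m ∣ n := by
      rintro ⟨k, rfl⟩
      exact hn ⟨k, rfl⟩
    simp [hd]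

/-- A countable sum of power series with nonnegative coefficients. -/
lemma pos0_tsum {f : ℕ → ℝ → ℝ} {F : ℝ → ℝ} (h0 : Pos0 (f 0)) (hf : ∀ n, Nonneg (f (n + 1)))
    (hF : ∀ x, 0 < x → x < 1 → HasSum (fun n => f n x) (F x)) : Pos0 F := by
  obtain ⟨c0, hc0, hpos⟩ := h0
  choose c' hc' using hf
  obtain ⟨c, hc, rfl⟩ : ∃ c : ℕ → ℕ → ℝ, (∀ n, Ser (c n) (f n)) ∧ c 0 = c0 :=
    ⟨fun n => Nat.casesOn n c0 c', fun n => by cases n <;> simp [hc0, hc'], rfl⟩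
  have hs : ∀ x, 0 < x → x < 1 → HasSum (fun u : ℕ × ℕ => c u.1 u.2 * x ^ u.2) (F x) := by
    intro x hx hx1
    have hs : Summable fun u : ℕ × ℕ => c u.1 u.2 * x ^ u.2 := by
      refine (summable_prod_of_nonneg fun u => mul_nonneg ((hc _).1 _) (by positivity)).2
        ⟨fun n => ((hc n).2 x hx hx1).summable, ?_⟩
      simpa only [((hc _).2 x hx hx1).tsum_eq] using (hF x hx hx1).summable
    have := hs.hasSum.prod_fiberwise fun n => (hc n).2 x hx hx1
    exact (this.unique (hF x hx hx1)) ▸ hs.hasSum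
  have hk : ∀ k, Summable fun n => c n k := by
    intro k
    have h := ((hs (1 / 2) (by norm_num) (by norm_num)).summable.comp_injective
      (Prod.mk_left_injective k)).mul_right (((1 / 2 : ℝ) ^ k)⁻¹)
    refine h.congr fun n => ?_
    simp only [Function.comp_apply]
    field_simp
  refine ⟨fun k => ∑' n, c n k, ⟨fun k => tsum_nonneg fun n => (hc n).1 k, fun x hx hx1 => ?_⟩, ?_⟩
  · have h := (hs x hx hx1)
    rw [← (Equiv.prodComm ℕ ℕ).hasSum_iff] at h
    exact h.prod_fiberwise fun k => (hk k).hasSum.mul_right (x ^ k)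
  · exact (hk 0).tsum_pos (fun n => (hc n).1 0) 0 hpos

lemma pos0_inv_qf {m : ℕ} (hm : m ≠ 0) (n : ℕ) : Pos0 fun x => 1 / qf (x ^ m) n := by
  refine (pos0_prod (f := fun k x => (1 - x ^ (m * (k + 1)))⁻¹)
    (fun k => pos0_geom (by positivity)) n).congr fun x _ _ => ?_
  rw [qf, one_div, ← Finset.prod_inv_distrib]
  simp only [pow_mul]

lemma pos0_inv_Q {a m : ℕ} (ha : a ≠ 0) (hm : m ≠ 0) : Pos0 fun x => (Q (x ^ a) (x ^ m))⁻¹ := by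
  refine pos0_tsum (f := fun n x => 1 / qf (x ^ m) n * x ^ (a * n)) ?_ (fun n =>
    (pos0_inv_qf hm _).nonneg.mul (nonneg_monomial _)) fun x h0 h1 => ?_
  · refine (pos0_inv_qf hm 0).congr fun x _ _ => ?_
    simp
  · simpa only [pow_mul] using hasSum_inv_Q (pow_pos h0 m) (pow_lt_one₀ h0.le h1 hm) (pow_pos h0 a)
      (pow_lt_one₀ h0.le h1 ha)

lemma pos0_Q_neg (a : ℕ) {m : ℕ} (hm : m ≠ 0) : Pos0 fun x => Q (-x ^ a) (x ^ m) := by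
  have ht : ∀ n : ℕ, ((tri n).toNat : ℤ) = tri n := fun n => by
    refine Int.toNat_of_nonneg ?_
    have := two_mul_tri n
    rcases n with _ | n
    · simp [tri]
    · push_cast at *
      nlinarith
  refine pos0_tsum (f := fun n x => 1 / qf (x ^ m) n * x ^ (m * (tri n).toNat + a * n)) ?_ (fun n =>
    (pos0_inv_qf hm _).nonneg.mul (nonneg_monomial _)) fun x h0 h1 => ?_
  · refine (pos0_inv_qf hm 0).congr fun x _ _ => ?_
    simp [tri]
  · have h := hasSum_Q (pow_pos h0 m) (pow_lt_one₀ h0.le h1 hm) (-x ^ a)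
    refine h.congr_fun fun n => ?_
    rw [ec, pow_add, pow_mul, pow_mul, neg_pow (x ^ a), ← zpow_natCast (x ^ m), ht]
    have hs : ((-1 : ℝ) ^ n) * (-1) ^ n = 1 := by rw [← mul_pow]; simp
    linear_combination -(x ^ m) ^ tri n / qf (x ^ m) n * (x ^ a) ^ n * hs

/-- Multiplication by `(1 - x)⁻¹` replaces coefficients by their partial sums. -/
lemma AllPos.of_pos0 {f : ℝ → ℝ} (hf : Pos0 f) : AllPos fun x => (1 - x)⁻¹ * f x := by
  obtain ⟨c, hc, h0⟩ := hf
  have h1 : Ser (fun _ => 1) fun x => (1 - x)⁻¹ :=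
    ⟨fun _ => zero_le_one, fun x h0 h1 => by simpa using hasSum_geometric_of_lt_one h0.le h1⟩
  refine ⟨_, h1.mul hc, fun n => ?_⟩
  simp only [one_mul]
  refine h0.trans_le ?_
  have := Finset.single_le_sum (f := fun k => c (n - k)) (fun k _ => hc.1 _)
    (Finset.self_mem_range_succ n)
  simpa using this

lemma pos0_inv_P {j : ℕ} (h0 : 0 < j) (h1 : j < 10) : Pos0 fun x => (P x j)⁻¹ := by
  refine ((pos0_inv_Q (a := j) (m := 10) (by omega) (by norm_num)).mul
    (pos0_inv_Q (a := 10 - j) (m := 10) (by omega) (by norm_num))).congr fun x _ _ => ?_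
  rw [P, mul_inv]

/-- The factor `1 / (1 - x)` of `1 / P x 1` makes all coefficients positive. -/
lemma allPos_mul_inv_P_one {f : ℝ → ℝ} (hf : Pos0 f) : AllPos fun x => (P x 1)⁻¹ * f x := by
  refine (AllPos.of_pos0 (((pos0_inv_Q (a := 11) (m := 10) (by norm_num) (by norm_num)).mul
    (pos0_inv_Q (a := 9) (m := 10) (by norm_num) (by norm_num))).mul hf)).congr fun x h0 h1 => ?_
  have h := Q_succ (pow_pos h0 10) (pow_lt_one₀ h0.le h1 (by norm_num)) x
  rw [← pow_succ'] at h
  norm_num only at h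
  rw [P, pow_one, h, mul_inv, mul_inv]
  ring

/-! ### The coefficients and their signs -/

/-- `∑ a m q ^ (5 m + i)`, as a power series in `q`. -/
lemma hasSum_spread {a : ℕ → ℝ} {q s : ℝ} (i : ℕ) (h : HasSum (fun m => a m * (q ^ 5) ^ m) s) :
    HasSum (fun n => (if n % 5 = i % 5 ∧ i ≤ n then a ((n - i) / 5) else 0) * q ^ n) (q ^ i * s) := by
  have hi : Function.Injective fun m : ℕ => 5 * m + i := fun x y hxy => by
    simp only at hxy; omega
  rw [← hi.hasSum_iff (fun n hn => ?_)]
  · refine (h.mul_left (q ^ i)).congr_fun fun m => ?_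
    have h1 : (5 * m + i) % 5 = i % 5 ∧ i ≤ 5 * m + i := by omega
    have h2 : (5 * m + i - i) / 5 = m := by omega
    simp only [Function.comp_apply]
    rw [if_pos h1, h2, pow_add, pow_mul]
    ring
  · rw [if_neg, zero_mul]
    rintro ⟨h1, h2⟩
    exact hn ⟨(n - i) / 5, by simp only; omega⟩

/-- The signs of the coefficients of `R(q ^ 2) / R(q) ^ 2` on the real line. -/
lemma exists_coeff : ∃ d : ℕ → ℝ,
    (∀ q, 0 < q → q < 1 → HasSum (fun n => d n * q ^ n) (rr (q ^ 2) / rr q ^ 2)) ∧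
      d 2 = 0 ∧ ∀ n, ((n % 5 = 0 ∨ n % 5 = 1) → 0 < d n) ∧
        (n ≠ 2 → (n % 5 = 2 ∨ n % 5 = 3 ∨ n % 5 = 4) → d n < 0) := by
  have p1 := pos0_inv_P (j := 1) (by norm_num) (by norm_num)
  have p2 := pos0_inv_P (j := 2) (by norm_num) (by norm_num)
  have p3 := pos0_inv_P (j := 3) (by norm_num) (by norm_num)
  have p4 := pos0_inv_P (j := 4) (by norm_num) (by norm_num)
  have p5 := pos0_inv_Q (a := 5) (m := 10) (by norm_num) (by norm_num)
  have A0 : AllPos fun w => P w 2 * (P w 1 ^ 6 * P w 3 ^ 2 * P w 4 ^ 5)⁻¹ := by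
    refine (allPos_mul_inv_P_one ((((p1.pow 4).mul (p3.pow 2)).mul (p4.pow 4)).mul
      ((pos0_Q_neg 1 (m := 5) (by norm_num)).mul (pos0_Q_neg 4 (m := 5) (by norm_num))))).congr
      fun x h0 h1 => ?_
    have a1 := (P_pos h0 h1 (j := 1) (by norm_num) (by norm_num)).ne'
    have a4 := (P_pos h0 h1 (j := 4) (by norm_num) (by norm_num)).ne'
    rw [P_two h0 h1, pow_one]
    field_simp
  have A1 : AllPos fun w =>
      (P w 1 ^ 4 * P w 2 ^ 2 * P w 3 ^ 3 * P w 4 ^ 2 * Q (w ^ 5) (w ^ 10) ^ 2)⁻¹ := by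
    refine (allPos_mul_inv_P_one (((((p1.pow 3).mul (p2.pow 2)).mul (p3.pow 3)).mul
      (p4.pow 2)).mul (p5.pow 2))).congr fun x h0 h1 => ?_
    simp only [mul_inv, inv_pow]
    ring
  have A2 : AllPos fun w =>
      (P w 1 ^ 3 * P w 2 * P w 3 ^ 3 * P w 4 ^ 3 * Q (w ^ 5) (w ^ 10) ^ 4)⁻¹ := by
    refine (allPos_mul_inv_P_one (((((p1.pow 2).mul p2).mul (p3.pow 3)).mul
      (p4.pow 3)).mul (p5.pow 4))).congr fun x h0 h1 => ?_
    simp only [mul_inv, inv_pow]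
    ring
  have A3 : AllPos fun w =>
      (P w 1 ^ 4 * P w 2 * P w 3 ^ 3 * P w 4 ^ 3 * Q (w ^ 5) (w ^ 10) ^ 2)⁻¹ := by
    refine (allPos_mul_inv_P_one (((((p1.pow 3).mul p2).mul (p3.pow 3)).mul
      (p4.pow 3)).mul (p5.pow 2))).congr fun x h0 h1 => ?_
    simp only [mul_inv, inv_pow]
    ring
  have A4 : AllPos fun w =>
      (P w 1 ^ 3 * P w 2 ^ 2 * P w 3 ^ 4 * P w 4 ^ 2 * Q (w ^ 5) (w ^ 10) ^ 2)⁻¹ := by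
    refine (allPos_mul_inv_P_one (((((p1.pow 2).mul (p2.pow 2)).mul (p3.pow 4)).mul
      (p4.pow 2)).mul (p5.pow 2))).congr fun x h0 h1 => ?_
    simp only [mul_inv, inv_pow]
    ring
  obtain ⟨a0, s0, pos0⟩ := A0
  obtain ⟨a1, s1, pos1⟩ := A1
  obtain ⟨a2, s2, pos2⟩ := A2
  obtain ⟨a3, s3, pos3⟩ := A3
  obtain ⟨a4, s4, pos4⟩ := A4
  let e (a : ℕ → ℝ) (i n : ℕ) : ℝ := if n % 5 = i % 5 ∧ i ≤ n then a ((n - i) / 5) else 0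
  have e0 : ∀ a i n, ¬(n % 5 = i % 5 ∧ i ≤ n) → e a i n = 0 := fun a i n h => if_neg h
  have e1 : ∀ a i n, (∀ n, 0 < a n) → n % 5 = i % 5 → i ≤ n → 0 < e a i n := fun a i n ha h h' => by
    simp only [e, if_pos (And.intro h h'), ha]
  refine ⟨fun n => e a0 0 n + 2 * e a1 1 n - 4 * e a2 7 n - 4 * e a3 3 n - 2 * e a4 4 n,
    fun q h0 h1 => ?_, ?_, fun n => ?_⟩
  · have hw0 : 0 < q ^ 5 := by positivity
    have hw1 : q ^ 5 < 1 := pow_lt_one₀ h0.le h1 (by norm_num)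
    rw [rr_dissection h0 h1 rfl]
    have h := ((((hasSum_spread 0 (s0.2 _ hw0 hw1)).add
      ((hasSum_spread 1 (s1.2 _ hw0 hw1)).mul_left 2)).sub
      ((hasSum_spread 7 (s2.2 _ hw0 hw1)).mul_left 4)).sub
      ((hasSum_spread 3 (s3.2 _ hw0 hw1)).mul_left 4)).sub
      ((hasSum_spread 4 (s4.2 _ hw0 hw1)).mul_left 2)
    refine Eq.mp (congrArg (HasSum _) ?_) (h.congr_fun fun n => ?_)
    · beta_reduce
      ring
    · simp only [e]
      ring
  -- none of `0`, `1`, `7`, `3`, `4` both is congruent to `2` modulo `5` and is at most `2`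
  · simp [e]
  beta_reduce
  constructor
  · rintro (h | h)
    · rw [e0 a1, e0 a2, e0 a3, e0 a4]
      · have := e1 a0 0 n pos0 h (by omega)
        linarith
      all_goals omega
    · rw [e0 a0, e0 a2, e0 a3, e0 a4]
      · have := e1 a1 1 n pos1 h (by omega)
        linarith
      all_goals omega
  · rintro h2 (h | h | h)
    · rw [e0 a0, e0 a1, e0 a3, e0 a4]
      · have := e1 a2 7 n pos2 h (by omega)
        linarith
      all_goals omega
    · rw [e0 a0, e0 a1, e0 a2, e0 a4]
      · have := e1 a3 3 n pos3 h (by omega)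
        linarith
      all_goals omega
    · rw [e0 a0, e0 a1, e0 a2, e0 a3]
      · have := e1 a4 4 n pos4 h (by omega)
        linarith
      all_goals omega

/-- A power series that vanishes on `(0, 1)` is zero. -/
lemma coeff_eq_zero {e : ℕ → ℝ} (h : ∀ q, 0 < q → q < 1 → HasSum (fun n => e n * q ^ n) 0) (n : ℕ) :
    e n = 0 := by
  induction n using Nat.strong_induction_on with
  | _ n ih =>
    have key : ∀ q, 0 < q → q < 1 → HasSum (fun k => e (k + n) * q ^ k) 0 := by
      intro q h0 h1
      have h' := (hasSum_nat_add_iff' n).2 (h q h0 h1)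
      rw [Finset.sum_eq_zero fun k hk => by rw [ih k (Finset.mem_range.1 hk), zero_mul],
        sub_zero] at h'
      have h'' := h'.mul_right (q ^ n)⁻¹
      rw [zero_mul] at h''
      refine h''.congr_fun fun k => ?_
      rw [pow_add]
      field_simp
    -- let `q = 2 ^ (-k - 1)` tend to zero
    have ht := tendsto_series (p := 1 / 2) (z := 1 / 2) (by norm_num) (by norm_num)
      (c := fun k => e (k + n)) (key (1 / 2) (by norm_num) (by norm_num)).summable.norm
    have hz : ∀ k : ℕ, ∑' m, e (m + n) * (1 / 2 * (1 / 2) ^ k) ^ m = (0 : ℝ) := fun k =>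
      (key _ (by positivity) (by
        rw [← pow_succ']
        exact pow_lt_one₀ (by norm_num) (by norm_num) (by simp))).tsum_eq
    simp only [hz, zero_add] at ht
    exact tendsto_nhds_unique ht tendsto_const_nhds

lemma qp_ofReal {a p : ℝ} (hp : 0 < p) (hp1 : p < 1) : qp a p = (Q a p : ℝ) := by
  have h := (multipliable_Q hp hp1 a).map_tprod Complex.ofRealHom Complex.continuous_ofReal
  rw [qp, Q]
  refine Eq.trans (tprod_congr fun k => ?_) h.symm
  simp

lemma RR_ofReal {q : ℝ} (hq : 0 < q) (hq1 : q < 1) : RR q = (rr q : ℝ) := by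
  have hq5 : q ^ 5 < 1 := pow_lt_one₀ hq.le hq1 (by norm_num)
  have h : ∀ a : ℝ, qp a ((q : ℂ) ^ 5) = (Q a (q ^ 5) : ℝ) := fun a => by
    rw [← qp_ofReal (by positivity) hq5, Complex.ofReal_pow]
  rw [RR, rr]
  push_cast
  simp only [← h, Complex.ofReal_pow]

end Dissect

theorem stmt19 (δ : ℕ → ℤ)
    (h : ∀ q : ℂ, ‖q‖ < 1 →
      RR (q ^ 2) / RR q ^ 2 = ∑' n : ℕ, (δ n : ℂ) * q ^ n) :
    δ 2 = 0 ∧ ∀ n : ℕ,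
      ((n % 5 = 0 ∨ n % 5 = 1) → 0 < δ n) ∧
      (n ≠ 2 → (n % 5 = 2 ∨ n % 5 = 3 ∨ n % 5 = 4) → δ n < 0) := by
  obtain ⟨d, hd, d2, hsign⟩ := Dissect.exists_coeff
  have hδ : ∀ q : ℝ, 0 < q → q < 1 →
      HasSum (fun n => (δ n : ℝ) * q ^ n) (Dissect.rr (q ^ 2) / Dissect.rr q ^ 2) := by
    intro q h0 h1
    have h' := h q (by rw [Complex.norm_real, Real.norm_of_nonneg h0.le]; exact h1)
    rw [Dissect.RR_ofReal h0 h1, ← Complex.ofReal_pow q 2,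
      Dissect.RR_ofReal (by positivity) (pow_lt_one₀ h0.le h1 (by norm_num))] at h'
    have hne : Dissect.rr (q ^ 2) / Dissect.rr q ^ 2 ≠ 0 := by
      rw [Dissect.rr_eq h0 h1, Dissect.rr_sq_eq]
      have a1 := Dissect.P_pos h0 h1 (j := 1) (by norm_num) (by norm_num)
      have a2 := Dissect.P_pos h0 h1 (j := 2) (by norm_num) (by norm_num)
      have a3 := Dissect.P_pos h0 h1 (j := 3) (by norm_num) (by norm_num)
      have a4 := Dissect.P_pos h0 h1 (j := 4) (by norm_num) (by norm_num)
      positivity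
    -- a divergent series would have the value `0`
    have hs : Summable fun n : ℕ => (δ n : ℂ) * (q : ℂ) ^ n := by
      by_contra hs
      rw [tsum_eq_zero_of_not_summable hs] at h'
      exact hne (by exact_mod_cast h')
    rw [← Complex.hasSum_ofReal]
    push_cast at h' ⊢
    rw [h']
    exact hs.hasSum
  have heq : ∀ n, (δ n : ℝ) = d n := fun n => by
    refine sub_eq_zero.1 (Dissect.coeff_eq_zero (e := fun n => (δ n : ℝ) - d n)
      (fun q h0 h1 => ?_) n)
    simpa [sub_mul] using (hδ q h0 h1).sub (hd q h0 h1)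
  simp only [← heq] at d2 hsign
  exact ⟨by exact_mod_cast d2, fun n => ⟨fun hn => by exact_mod_cast (hsign n).1 hn,
    fun h2 hn => by exact_mod_cast (hsign n).2 h2 hn⟩⟩
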